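/- Let H = Pa ∪_{e_rep} Cy be a cycle-with-handles, where Pa is an st-path, e_rep ∈ E(Pa), and Cy is an st-cycle. Let d_rep = d_Pa(e_rep), let γ₁, γ₂ be the two directed paths from s_Cy to t_Cy comprising Cy (with γ₁ ∩ γ₂ = {s_Cy, t_Cy}), and let ht_cyc = max_{u∈γ₁} dist_Cy(u,{s_Cy,t_Cy}) + max_{u∈γ₂} dist_Cy(u,{s_Cy,t_Cy}). Then for every n ≥ 0, c₁(TC(H^{⊘n})) ≥ ((2−√2)/4)·d_rep·ht_cyc·n. -/

import Mathlib

open Finset MeasureTheory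

open Finset MeasureTheory

/-- The transportation cost norm of a zero-total-mass signed measure `μ` (represented as a
function `V → ℝ`) on a finite metric space with distance `d`: the infimum of costs of
transportation plans representing `μ`. -/
noncomputable def TCnorm {V : Type*} [Fintype V] [DecidableEq V]
    (d : V → V → ℝ) (μ : V → ℝ) : ℝ :=
  sInf { c : ℝ | ∃ (n : ℕ) (a : Fin n → ℝ) (x y : Fin n → V),
    (∀ i, 0 ≤ a i) ∧
    (∀ z : V, μ z = ∑ i, a i * ((if x i = z then (1 : ℝ) else 0) -
      (if y i = z then (1 : ℝ) else 0))) ∧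
    c = ∑ i, a i * d (x i) (y i) }

/-- The `L₁`-distortion of a space `M` equipped with a distance function `ρ`:
the infimum of `D ≥ 1` such that there is a measure space `(Ω, ν)` and a map
`f : M → L₁(ν)` with `ρ x y ≤ ‖f x - f y‖₁ ≤ D * ρ x y` for all `x, y`. -/
noncomputable def c1OfDist {M : Type*} (ρ : M → M → ℝ) : ℝ :=
  sInf { D : ℝ | 1 ≤ D ∧ ∃ (Ω : Type) (_ : MeasurableSpace Ω) (ν : Measure Ω)
    (f : M → Lp ℝ 1 ν), ∀ x y : M,
      ρ x y ≤ dist (f x) (f y) ∧ dist (f x) (f y) ≤ D * ρ x y }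

/-- The `L₁`-distortion of the transportation cost space `TC(V, d)`, i.e. of the space of
zero-total-mass signed measures on `V` with the metric induced by the transportation cost
norm. -/
noncomputable def c1TC {V : Type*} [Fintype V] [DecidableEq V] (d : V → V → ℝ) : ℝ :=
  c1OfDist (fun μ ν : {μ : V → ℝ // ∑ x, μ x = 0} => TCnorm d (fun x => μ.1 x - ν.1 x))

/-- The support of a signed measure given as a function. -/
def msupp {V : Type*} (μ : V → ℝ) : Set V := {x | μ x ≠ 0}

/-- Diameter of a set with respect to a distance function. -/
noncomputable def sDiam {V : Type*} (d : V → V → ℝ) (S : Set V) : ℝ :=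
  sSup { c : ℝ | ∃ x ∈ S, ∃ y ∈ S, c = d x y }

/-- Distance between two sets with respect to a distance function. -/
noncomputable def sDist {V : Type*} (d : V → V → ℝ) (S T : Set V) : ℝ :=
  sInf { c : ℝ | ∃ x ∈ S, ∃ y ∈ T, c = d x y }
/-- A finite weighted directed graph with distinguished source and sink vertices, edge
lengths, and an edge thickness function. This is the underlying data of an `st`-graph. -/
structure WGraph : Type 1 where
  /-- vertex set -/
  V : Type
  /-- edge index set -/
  ι : Type
  finV : Fintype V
  decV : DecidableEq V
  finι : Fintype ι
  decι : DecidableEq ι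
  /-- initial vertex of an edge -/
  src : ι → V
  /-- terminal vertex of an edge -/
  dst : ι → V
  /-- length of an edge -/
  len : ι → ℝ
  /-- thickness of an edge -/
  th : ι → ℝ
  /-- source vertex -/
  s : V
  /-- sink vertex -/
  t : V

attribute [instance] WGraph.finV WGraph.decV WGraph.finι WGraph.decι

namespace WGraph

/-- Initial vertex of a step (an edge traversed forwards or backwards). -/
def stepSrc (G : WGraph) (p : G.ι × Bool) : G.V := if p.2 then G.src p.1 else G.dst p.1

/-- Terminal vertex of a step. -/
def stepDst (G : WGraph) (p : G.ι × Bool) : G.V := if p.2 then G.dst p.1 else G.src p.1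

/-- `G.IsWalk x y l` : the list of steps `l` forms a walk from `x` to `y` in the underlying
undirected graph of `G`. -/
def IsWalk (G : WGraph) : G.V → G.V → List (G.ι × Bool) → Prop
  | x, y, [] => x = y
  | x, y, p :: l => G.stepSrc p = x ∧ G.IsWalk (G.stepDst p) y l

/-- `G.IsDiWalk x y l` : the list of edges `l` forms a directed walk from `x` to `y`. -/
def IsDiWalk (G : WGraph) : G.V → G.V → List G.ι → Prop
  | x, y, [] => x = y
  | x, y, e :: l => G.src e = x ∧ G.IsDiWalk (G.dst e) y l

/-- The length of a directed walk. -/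
def diLen (G : WGraph) (l : List G.ι) : ℝ := (l.map G.len).sum

/-- The weighted shortest-path metric of `G`. -/
noncomputable def gdist (G : WGraph) (x y : G.V) : ℝ :=
  sInf { c : ℝ | ∃ l : List (G.ι × Bool), G.IsWalk x y l ∧
    c = (l.map fun p => G.len p.1).sum }

end WGraph

/-- `G` is an `st`-graph: it has positive edge lengths and thicknesses, it is connected,
its weighted shortest-path metric satisfies `d(s,t) = 1`, every directed path is a
geodesic, and the thickness function is witnessed by a finite nonempty family of directed
edge paths from `s` to `t` via `th(e) = |{i : e ∈ γ_i}| / |I|`. -/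
structure IsSTGraph (G : WGraph) : Prop where
  s_ne_t : G.s ≠ G.t
  len_pos : ∀ e, 0 < G.len e
  th_pos : ∀ e, 0 < G.th e
  conn : ∀ x y : G.V, ∃ l, G.IsWalk x y l
  dist_st : G.gdist G.s G.t = 1
  dir_geodesic : ∀ (x y : G.V) (l : List G.ι), G.IsDiWalk x y l → G.gdist x y = G.diLen l
  th_witness : ∃ (m : ℕ) (γ : Fin (m + 1) → List G.ι),
    (∀ i, G.IsDiWalk G.s G.t (γ i)) ∧
    ∀ e : G.ι, G.th e = ((Finset.univ.filter fun i => e ∈ γ i).card : ℝ) / (m + 1)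

/-- `G` is an `st`-path: it consists of a single directed path from `s` to `t`, and all
edges have thickness `1`. -/
def IsSTPath (G : WGraph) : Prop :=
  ∃ (k : ℕ) (E : Fin k ≃ G.ι) (v : Fin (k + 1) → G.V),
    Function.Bijective v ∧ v 0 = G.s ∧ v (Fin.last k) = G.t ∧
    (∀ i : Fin k, G.src (E i) = v i.castSucc ∧ G.dst (E i) = v i.succ) ∧
    (∀ e, G.th e = 1)

namespace WGraph

/-- The map sending a vertex of `H` to the corresponding vertex of `G ⊘ H` obtained by
replacing the edge `e` of `G` with a copy of `H` (where `s_H` is identified with the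
initial vertex of `e` and `t_H` with the terminal vertex of `e`). -/
def slashEmbed (G H : WGraph) (e : G.ι) (v : H.V) :
    G.V ⊕ (G.ι × {v : H.V // v ≠ H.s ∧ v ≠ H.t}) :=
  if hs : v = H.s then Sum.inl (G.src e)
  else if ht : v = H.t then Sum.inl (G.dst e)
  else Sum.inr (e, ⟨v, hs, ht⟩)

/-- The slash product `G ⊘ H`: every edge of `G` is replaced by a copy of `H`. New edge
lengths and thicknesses are the products of the corresponding ones of `G` and `H`. -/
def slash (G H : WGraph) : WGraph where
  V := G.V ⊕ (G.ι × {v : H.V // v ≠ H.s ∧ v ≠ H.t})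
  ι := G.ι × H.ι
  finV := inferInstance
  decV := inferInstance
  finι := inferInstance
  decι := inferInstance
  src := fun p => slashEmbed G H p.1 (H.src p.2)
  dst := fun p => slashEmbed G H p.1 (H.dst p.2)
  len := fun p => G.len p.1 * H.len p.2
  th := fun p => G.th p.1 * H.th p.2
  s := Sum.inl G.s
  t := Sum.inl G.t

/-- The trivial `st`-path: a single directed edge from `s` to `t` of length 1 and
thickness 1. -/
def edgeGraph : WGraph where
  V := Bool
  ι := Unit
  finV := inferInstance
  decV := inferInstance
  finι := inferInstance
  decι := inferInstance
  src := fun _ => false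
  dst := fun _ => true
  len := fun _ => 1
  th := fun _ => 1
  s := false
  t := true

/-- Slash powers: `G^{⊘0}` is a single directed edge from `s` to `t` of length 1 and
thickness 1, and `G^{⊘(n+1)} = G^{⊘n} ⊘ G`. -/
def slashPow (G : WGraph) : ℕ → WGraph
  | 0 => edgeGraph
  | n + 1 => (G.slashPow n).slash G

end WGraph

namespace WGraph

/-- The edge replacement `G ∪_{e₀} H`: the edge `e₀` of `G` is replaced by a copy of `H`,
identifying the initial vertex of `e₀` with `s_H` and the terminal vertex of `e₀` with
`t_H`. New edges get length `d_G(e₀)·d_H(e')` and thickness `th_G(e₀)·th_H(e')`; other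
edges are unchanged. -/
def edgeReplace (G : WGraph) (e₀ : G.ι) (H : WGraph) : WGraph where
  V := G.V ⊕ {v : H.V // v ≠ H.s ∧ v ≠ H.t}
  ι := {e : G.ι // e ≠ e₀} ⊕ H.ι
  finV := inferInstance
  decV := inferInstance
  finι := inferInstance
  decι := inferInstance
  src := Sum.elim (fun e => Sum.inl (G.src e.1))
    (fun e' =>
      if hs : H.src e' = H.s then Sum.inl (G.src e₀)
      else if ht : H.src e' = H.t then Sum.inl (G.dst e₀)
      else Sum.inr ⟨H.src e', hs, ht⟩)
  dst := Sum.elim (fun e => Sum.inl (G.dst e.1))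
    (fun e' =>
      if hs : H.dst e' = H.s then Sum.inl (G.src e₀)
      else if ht : H.dst e' = H.t then Sum.inl (G.dst e₀)
      else Sum.inr ⟨H.dst e', hs, ht⟩)
  len := Sum.elim (fun e => G.len e.1) (fun e' => G.len e₀ * H.len e')
  th := Sum.elim (fun e => G.th e.1) (fun e' => G.th e₀ * H.th e')
  s := Sum.inl G.s
  t := Sum.inl G.t

end WGraph


/-- Linear inequality transferred to `L₁`. -/
lemma lin_L1 {Ω : Type} [MeasurableSpace Ω] {ν : Measure Ω} {β I J : Type} [Fintype β]
    [Fintype I] [Fintype J] (w : I → β → ℤ) (u : J → β → ℤ) (p : I → ℝ) (q : J → ℝ)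
    (hlin : ∀ φ : β → ℝ, ∑ i, p i * |∑ b, (w i b : ℝ) * φ b|
      ≤ ∑ j, q j * |∑ b, (u j b : ℝ) * φ b|) (T : β → Lp ℝ 1 ν) :
    ∑ i, p i * ‖∑ b, (w i b : ℝ) • T b‖ ≤ ∑ j, q j * ‖∑ b, (u j b : ℝ) • T b‖ := by
  have key : ∀ c : β → ℝ, Integrable (fun ω => |∑ b, c b * T b ω|) ν ∧
      ‖∑ b, c b • T b‖ = ∫ ω, |∑ b, c b * T b ω| ∂ν := by
    intro c
    have hi : ∀ b, Integrable (fun ω => c b * T b ω) ν := fun b =>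
      (L1.integrable_coeFn (T b)).const_mul (c b)
    refine ⟨(integrable_finsetSum _ fun b _ => hi b).abs, ?_⟩
    rw [L1.norm_eq_integral_norm]
    apply integral_congr_ae
    have h1 : ∀ S : Finset β, (∑ b ∈ S, c b • T b : Lp ℝ 1 ν) =ᵐ[ν]
        fun ω => ∑ b ∈ S, c b * T b ω := by
      classical
      intro S
      induction S using Finset.induction_on with
      | empty => simp only [Finset.sum_empty]; exact Lp.coeFn_zero ℝ 1 ν
      | insert a S ha ih =>
        rw [Finset.sum_insert ha]
        filter_upwards [ih, Lp.coeFn_add (c a • T a) (∑ b ∈ S, c b • T b),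
          Lp.coeFn_smul (c a) (T a)] with ω h1 h2 h3
        rw [h2, Pi.add_apply, h1, h3, Finset.sum_insert ha]
        simp
    filter_upwards [h1 univ] with ω h
    rw [h, Real.norm_eq_abs]
  calc ∑ i, p i * ‖∑ b, (w i b : ℝ) • T b‖
      = ∫ ω, ∑ i, p i * |∑ b, (w i b : ℝ) * T b ω| ∂ν := by
        rw [integral_finsetSum _ (fun i _ => (key fun b => (w i b : ℝ)).1.const_mul _)]
        refine Finset.sum_congr rfl fun i _ => ?_
        rw [integral_const_mul, (key fun b => (w i b : ℝ)).2]
    _ ≤ ∫ ω, ∑ j, q j * |∑ b, (u j b : ℝ) * T b ω| ∂ν := by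
        apply integral_mono
        · exact integrable_finsetSum _ (fun i _ => (key fun b => (w i b : ℝ)).1.const_mul _)
        · exact integrable_finsetSum _ (fun i _ => (key fun b => (u i b : ℝ)).1.const_mul _)
        · intro ω
          exact hlin fun b => T b ω
    _ = _ := by
        rw [integral_finsetSum _ (fun i _ => (key fun b => (u i b : ℝ)).1.const_mul _)]
        refine Finset.sum_congr rfl fun i _ => ?_
        rw [integral_const_mul, (key fun b => (u i b : ℝ)).2]

section avg
variable {X Y : Type*} [AddCommGroup X] [NormedAddCommGroup Y] [NormedSpace ℝ Y]

/-- Averaging along a direction. -/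
noncomputable def av (L : ℕ) (e : X) (F : X → Y) (x : X) : Y :=
  (L : ℝ)⁻¹ • ∑ r ∈ range L, F (x + r • e)

lemma av_bound {L : ℕ} (e : X) (F : X → Y) {K : ℝ} (hL : 0 < L)
    (h : ∀ x, ‖F x‖ ≤ K) (x : X) : ‖av L e F x‖ ≤ K := by
  have hL' : (0 : ℝ) < L := by exact_mod_cast hL
  rw [av, norm_smul, norm_inv, Real.norm_of_nonneg hL'.le, inv_mul_le_iff₀ hL']
  calc _ ≤ ∑ r ∈ range L, ‖F (x + r • e)‖ := norm_sum_le _ _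
    _ ≤ ∑ r ∈ range L, K := Finset.sum_le_sum fun _ _ => h _
    _ = L * K := by simp

lemma av_sub (L : ℕ) (e : X) (F G : X → Y) (x : X) :
    av L e (fun x => F x - G x) x = av L e F x - av L e G x := by
  simp [av, smul_sub]

lemma av_shift (L : ℕ) (e w : X) (F : X → Y) (x : X) :
    av L e (fun x => F (x + w)) x = av L e F (x + w) := by
  simp only [av]; congr 1; refine Finset.sum_congr rfl fun r _ => ?_
  congr 1; abel

lemma av_diff (L : ℕ) (e : X) (F : X → Y) (x : X) :
    av L e F (x + e) - av L e F x = (L : ℝ)⁻¹ • (F (x + L • e) - F x) := by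
  simp only [av, ← smul_sub]; congr 1
  rw [← Finset.sum_sub_distrib]
  have : ∀ r, F (x + e + r • e) - F (x + r • e) =
      (fun r : ℕ => F (x + r • e)) (r + 1) - (fun r : ℕ => F (x + r • e)) r := by
    intro r; simp only; congr 2; rw [succ_nsmul]; abel
  rw [Finset.sum_congr rfl fun r _ => this r]
  exact (Finset.sum_range_sub (fun r : ℕ => F (x + r • e)) L).trans (by simp)

lemma mollify {β : Type*} (e : β → X) (F : X → Y)
    (hK : ∀ w, ∃ K, ∀ x, ‖F (x + w) - F x‖ ≤ K) (η : ℝ) (hη : 0 < η) (S : Finset β) :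
    ∃ G : X → Y, (∀ w K, (∀ x, ‖F (x + w) - F x‖ ≤ K) → ∀ x, ‖G (x + w) - G x‖ ≤ K) ∧
      (∀ b ∈ S, ∀ w K, (∀ x, ‖F (x + w) - F x‖ ≤ K) → ∀ x,
        ‖(G (x + w + e b) - G (x + w)) - (G (x + e b) - G x)‖ ≤ η * K) ∧
      ∃ C, ∀ x, ‖G x - F x‖ ≤ C := by
  classical
  induction S using Finset.induction_on with
  | empty => exact ⟨F, fun _ _ h => h, by simp, 0, by simp⟩
  | insert b S hb ih =>
    obtain ⟨G, h1, h2, C, h3⟩ := ih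
    obtain ⟨L, hL⟩ := exists_nat_gt (2 / η)
    have hL0 : (0 : ℝ) < L := lt_trans (by positivity) hL
    have hL1 : 0 < L := by exact_mod_cast hL0
    refine ⟨av L (e b) G, ?_, ?_, ?_⟩
    · intro w K h x
      rw [← av_shift, ← av_sub]
      exact av_bound _ _ hL1 (h1 w K h) x
    · intro b' hb' w K h x
      rcases Finset.mem_insert.1 hb' with rfl | hb'
      · rw [av_diff, av_diff, ← smul_sub, norm_smul, norm_inv, Real.norm_of_nonneg hL0.le,
          inv_mul_le_iff₀ hL0]
        have ha := h1 w K h (x + L • e b')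
        have hc := h1 w K h x
        have hK0 : 0 ≤ K := le_trans (norm_nonneg _) hc
        have heq : G (x + w + L • e b') - G (x + w) - (G (x + L • e b') - G x) =
            (G (x + L • e b' + w) - G (x + L • e b')) - (G (x + w) - G x) := by
          rw [show x + w + L • e b' = x + L • e b' + w by abel]; abel
        rw [heq]
        refine (norm_sub_le _ _).trans ?_
        have : 2 ≤ L * η := by
          rw [div_lt_iff₀ hη] at hL; exact hL.le
        nlinarith
      · have := av_bound (e b) (fun x => (G (x + w + e b') - G (x + w)) - (G (x + e b') - G x))
          hL1 (h2 b' hb' w K h) x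
        rw [av_sub, av_sub, av_sub, av_shift L (e b) (e b') G, av_shift L (e b) w G] at this
        have h5 : av L (e b) (fun x => G (x + w + e b')) x = av L (e b) G (x + w + e b') := by
          have := av_shift L (e b) (w + e b') G x
          simpa [add_assoc] using this
        rwa [h5] at this
    · choose K hK' using hK
      refine ⟨(∑ r ∈ range L, K (r • e b)) + C, fun x => ?_⟩
      have hd : av L (e b) G x - F x = (av L (e b) G x - G x) + (G x - F x) := by abel
      rw [hd]
      refine (norm_add_le _ _).trans (add_le_add ?_ (h3 x))
      have hx : av L (e b) G x - G x = (L : ℝ)⁻¹ • ∑ r ∈ range L, (G (x + r • e b) - G x) := by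
        rw [av, Finset.sum_sub_distrib, smul_sub]
        congr 1
        rw [Finset.sum_const, card_range, ← Nat.cast_smul_eq_nsmul ℝ, smul_smul,
          inv_mul_cancel₀ hL0.ne', one_smul]
      rw [hx, norm_smul, norm_inv, Real.norm_of_nonneg hL0.le]
      have h6 : ‖∑ r ∈ range L, (G (x + r • e b) - G x)‖ ≤ ∑ r ∈ range L, K (r • e b) :=
        (norm_sum_le _ _).trans (Finset.sum_le_sum fun r _ => h1 _ _ (hK' (r • e b)) x)
      have h7 : (L : ℝ)⁻¹ ≤ 1 := inv_le_one_of_one_le₀ (by exact_mod_cast hL1)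
      calc _ ≤ 1 * ‖∑ r ∈ range L, (G (x + r • e b) - G x)‖ := by gcongr
        _ ≤ _ := by simpa using h6

/-- Approximate linearity of a mollified map. -/
lemma approx_linear {β : Type*} [Fintype β] [DecidableEq β] (F : (β → ℤ) → Y)
    (hK : ∀ w, ∃ K, ∀ x, ‖F (x + w) - F x‖ ≤ K) (w : β → ℤ) :
    ∃ C, ∀ η : ℝ, 0 < η → ∀ G : (β → ℤ) → Y,
      (∀ b : β, ∀ w K, (∀ x, ‖F (x + w) - F x‖ ≤ K) → ∀ x,
        ‖(G (x + w + Pi.single b 1) - G (x + w)) - (G (x + Pi.single b 1) - G x)‖ ≤ η * K) →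
      ∀ x, ‖G (x + w) - G x - ∑ b, (w b : ℝ) • (G (x + Pi.single b 1) - G x)‖ ≤ η * C := by
  choose K hK' using hK
  have diff : ∀ (w' w : β → ℤ) (η : ℝ), 0 < η → ∀ G : (β → ℤ) → Y,
      (∀ b : β, ∀ w K, (∀ x, ‖F (x + w) - F x‖ ≤ K) → ∀ x,
        ‖(G (x + w + Pi.single b 1) - G (x + w)) - (G (x + Pi.single b 1) - G x)‖ ≤ η * K) →
      ∀ x, ‖∑ b, (w' b : ℝ) • (G (x + w + Pi.single b 1) - G (x + w)) -
        ∑ b, (w' b : ℝ) • (G (x + Pi.single b 1) - G x)‖ ≤ η * ∑ b, |(w' b : ℝ)| * K w := by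
    intro w' w η hη G hG x
    rw [← Finset.sum_sub_distrib, Finset.mul_sum]
    refine (norm_sum_le _ _).trans (Finset.sum_le_sum fun b _ => ?_)
    rw [← smul_sub, norm_smul, Real.norm_eq_abs]
    calc _ ≤ |(w' b : ℝ)| * (η * K w) := by gcongr; exact hG b w _ (hK' w) x
      _ = _ := by ring
  let S : AddSubgroup (β → ℤ) :=
    { carrier := {w | ∃ C, ∀ η : ℝ, 0 < η → ∀ G : (β → ℤ) → Y,
      (∀ b : β, ∀ w K, (∀ x, ‖F (x + w) - F x‖ ≤ K) → ∀ x,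
        ‖(G (x + w + Pi.single b 1) - G (x + w)) - (G (x + Pi.single b 1) - G x)‖ ≤ η * K) →
      ∀ x, ‖G (x + w) - G x - ∑ b, (w b : ℝ) • (G (x + Pi.single b 1) - G x)‖ ≤ η * C}
      zero_mem' := ⟨0, by intros; simp⟩
      add_mem' := by
        rintro w w' ⟨C, hC⟩ ⟨C', hC'⟩
        refine ⟨C + C' + ∑ b, |(w' b : ℝ)| * K w, fun η hη G hG x => ?_⟩
        have h1 := hC η hη G hG x
        have h2 := hC' η hη G hG (x + w)
        have h3 := diff w' w η hη G hG x
        have : G (x + (w + w')) - G x - ∑ b, ((w + w') b : ℝ) • (G (x + Pi.single b 1) - G x) =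
          (G (x + w) - G x - ∑ b, (w b : ℝ) • (G (x + Pi.single b 1) - G x)) +
          (G (x + w + w') - G (x + w) -
            ∑ b, (w' b : ℝ) • (G (x + w + Pi.single b 1) - G (x + w))) +
          (∑ b, (w' b : ℝ) • (G (x + w + Pi.single b 1) - G (x + w)) -
            ∑ b, (w' b : ℝ) • (G (x + Pi.single b 1) - G x)) := by
          simp only [Pi.add_apply, Int.cast_add, add_smul, Finset.sum_add_distrib, ← add_assoc]
          abel
        rw [this]
        refine (norm_add₃_le).trans ?_
        linarith
      neg_mem' := by
        rintro w ⟨C, hC⟩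
        refine ⟨C + ∑ b, |(w b : ℝ)| * K w, fun η hη G hG x => ?_⟩
        have h1 := hC η hη G hG (x - w)
        have h3 := diff w w η hη G hG (x - w)
        rw [sub_add_cancel] at h1 h3
        have : G (x + -w) - G x - ∑ b, ((-w) b : ℝ) • (G (x + Pi.single b 1) - G x) =
          -(G x - G (x - w) - ∑ b, (w b : ℝ) • (G (x - w + Pi.single b 1) - G (x - w))) +
          (∑ b, (w b : ℝ) • (G (x + Pi.single b 1) - G x) -
            ∑ b, (w b : ℝ) • (G (x - w + Pi.single b 1) - G (x - w))) := by
          simp only [Pi.neg_apply, Int.cast_neg, neg_smul, Finset.sum_neg_distrib, ← sub_eq_add_neg]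
          abel
        rw [this]
        refine (norm_add_le _ _).trans ?_
        rw [norm_neg]
        linarith }
  have hw : w = ∑ b, w b • (Pi.single b 1 : β → ℤ) := by
    ext c
    simp [Finset.sum_apply, Pi.single_apply]
  have : w ∈ S := by
    rw [hw]
    refine sum_mem fun b _ => zsmul_mem ?_ _
    refine ⟨0, fun η hη G hG x => ?_⟩
    rw [Finset.sum_eq_single b]
    · simp
    · intro c _ hc; simp [hc]
    · simp
  exact this

lemma exists_avg {I : Type*} (R : ℕ) (hR : 0 < R) (w : I → X) (a : I → ℝ) (S : Finset I) :
    ∀ h : I → X → ℝ, (∀ i ∈ S, ∀ x, a i ≤ av R (w i) (h i) x) →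
      ∃ y, ∑ i ∈ S, a i ≤ ∑ i ∈ S, h i y := by
  classical
  have hR0 : (0 : ℝ) < R := by exact_mod_cast hR
  induction S using Finset.induction_on with
  | empty => intro h _; exact ⟨0, by simp⟩
  | insert i₀ S hi ih =>
    intro h hh
    obtain ⟨y, hy⟩ := ih (fun i => av R (w i₀) (h i)) (by
      intro i hiS x
      have h1 := hh i (Finset.mem_insert_of_mem hiS)
      have h2 : av R (w i) (av R (w i₀) (h i)) x = av R (w i₀) (av R (w i) (h i)) x := by
        simp only [av, smul_eq_mul, ← Finset.mul_sum]
        rw [Finset.sum_comm]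
        congr 2
        refine Finset.sum_congr rfl fun r _ => Finset.sum_congr rfl fun s _ => ?_
        congr 1; abel
      rw [h2]
      simp only [av, smul_eq_mul]
      rw [le_inv_mul_iff₀ hR0]
      calc (R : ℝ) * a i = ∑ r ∈ range R, a i := by simp
        _ ≤ _ := Finset.sum_le_sum fun r _ => h1 _)
    have h0 := hh i₀ (Finset.mem_insert_self _ _) y
    have h3 : ∑ r ∈ range R, ∑ i ∈ insert i₀ S, a i ≤
        ∑ r ∈ range R, ∑ i ∈ insert i₀ S, h i (y + r • w i₀) := by
      rw [Finset.sum_const, card_range, nsmul_eq_mul, ← le_inv_mul_iff₀ hR0]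
      rw [Finset.sum_comm, Finset.mul_sum, Finset.sum_insert hi, Finset.sum_insert hi]
      exact add_le_add h0 hy
    obtain ⟨r, -, hr⟩ := Finset.exists_le_of_sum_le (by simpa using hR.ne') h3
    exact ⟨_, hr⟩
end avg

/-- Transfer of linear inequalities to nonlinear maps into `L₁`. -/
lemma transfer {Ω : Type} [MeasurableSpace Ω] {ν : Measure Ω} {β I J : Type} [Fintype β]
    [DecidableEq β] [Fintype I] [Fintype J] (F : (β → ℤ) → Lp ℝ 1 ν)
    (w : I → β → ℤ) (u : J → β → ℤ) (p : I → ℝ) (q : J → ℝ) (hp : ∀ i, 0 ≤ p i)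
    (hq : ∀ j, 0 ≤ q j) (A : I → ℝ) (B : J → ℝ)
    (hA : ∀ i x (R : ℕ), R * A i ≤ ‖F (x + R • w i) - F x‖)
    (hB : ∀ j x, ‖F (x + u j) - F x‖ ≤ B j)
    (hK : ∀ w, ∃ K, ∀ x, ‖F (x + w) - F x‖ ≤ K)
    (hlin : ∀ φ : β → ℝ, ∑ i, p i * |∑ b, (w i b : ℝ) * φ b|
      ≤ ∑ j, q j * |∑ b, (u j b : ℝ) * φ b|) :
    ∑ i, p i * A i ≤ ∑ j, q j * B j := by
  choose Cc hCc using approx_linear F hK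
  set C := ∑ i, p i * Cc (w i) + ∑ j, q j * Cc (u j) with hCdef
  apply le_of_forall_pos_le_add
  intro ε hε
  obtain ⟨η, hη, hηC⟩ : ∃ η : ℝ, 0 < η ∧ η * C ≤ ε / 2 := by
    refine ⟨ε / 2 / (|C| + 1), by positivity, ?_⟩
    rw [div_mul_eq_mul_div, div_le_iff₀ (by positivity)]
    have := le_abs_self C
    have h2 : 0 < ε / 2 := by positivity
    nlinarith
  obtain ⟨G, h1, h2, c, h3⟩ := mollify (fun b : β => (Pi.single b 1 : β → ℤ)) F hK η hη univ
  have hap := fun v => hCc v η hη G (fun b => h2 b (mem_univ b))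
  have hup : ∀ x, ∑ i, p i * ‖G (x + w i) - G x‖ ≤ ∑ j, q j * B j + η * C := by
    intro x
    have hl := lin_L1 w u p q hlin (fun b => G (x + Pi.single b 1) - G x)
    have e1 : ∑ i, p i * ‖G (x + w i) - G x‖ ≤
        ∑ i, (p i * ‖∑ b, (w i b : ℝ) • (G (x + Pi.single b 1) - G x)‖ +
          η * (p i * Cc (w i))) := by
      refine Finset.sum_le_sum fun i _ => ?_
      have := hap (w i) x
      have h5 := norm_sub_norm_le (G (x + w i) - G x)
        (∑ b, (w i b : ℝ) • (G (x + Pi.single b 1) - G x))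
      have := hp i
      nlinarith
    have e2 : ∑ j, q j * ‖∑ b, (u j b : ℝ) • (G (x + Pi.single b 1) - G x)‖ ≤
        ∑ j, (q j * B j + η * (q j * Cc (u j))) := by
      refine Finset.sum_le_sum fun j _ => ?_
      have := hap (u j) x
      have h5 := norm_sub_norm_le (∑ b, (u j b : ℝ) • (G (x + Pi.single b 1) - G x))
        (G (x + u j) - G x)
      rw [norm_sub_rev _ (G (x + u j) - G x)] at h5
      have h6 := h1 _ _ (hB j) x
      have := hq j
      nlinarith
    rw [Finset.sum_add_distrib, ← Finset.mul_sum] at e1 e2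
    rw [hCdef, mul_add]
    linarith
  obtain ⟨R, hR⟩ := exists_nat_gt (2 * (2 * c * ∑ i, p i) / ε)
  have hc0 : 0 ≤ c := (norm_nonneg _).trans (h3 0)
  have hps : 0 ≤ ∑ i, p i := Finset.sum_nonneg fun i _ => hp i
  have hR0 : (0 : ℝ) < R := lt_of_le_of_lt (by positivity) hR
  have hR1 : 0 < R := by exact_mod_cast hR0
  obtain ⟨y, hy⟩ := exists_avg R hR1 w (fun i => p i * A i - p i * (2 * c / R)) univ
    (fun i x => p i * ‖G (x + w i) - G x‖) (by
      intro i _ x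
      simp only [av, smul_eq_mul]
      rw [le_inv_mul_iff₀ hR0, ← Finset.mul_sum]
      have ht : ‖G (x + R • w i) - G x‖ ≤
          ∑ r ∈ range R, ‖G (x + r • w i + w i) - G (x + r • w i)‖ := by
        have : G (x + R • w i) - G x =
            ∑ r ∈ range R, (G (x + r • w i + w i) - G (x + r • w i)) := by
          have h7 := Finset.sum_range_sub (fun r : ℕ => G (x + r • w i)) R
          simp only [zero_smul, add_zero, succ_nsmul] at h7
          rw [← h7]
          refine Finset.sum_congr rfl fun r _ => ?_
          rw [add_assoc]
        rw [this]
        exact norm_sum_le _ _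
      have h4 : R * A i - 2 * c ≤ ‖G (x + R • w i) - G x‖ := by
        have ha := hA i x R
        have hb := h3 (x + R • w i)
        have hc := h3 x
        have hd : F (x + R • w i) - F x = (G (x + R • w i) - G x) +
          (-(G (x + R • w i) - F (x + R • w i)) + (G x - F x)) := by abel
        rw [hd] at ha
        have he := norm_add_le (G (x + R • w i) - G x)
          (-(G (x + R • w i) - F (x + R • w i)) + (G x - F x))
        have hf := norm_add_le (-(G (x + R • w i) - F (x + R • w i))) (G x - F x)
        rw [norm_neg] at hf
        linarith
      have h5 : (R : ℝ) * (p i * A i - p i * (2 * c / R)) = p i * (R * A i - 2 * c) := by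
        field_simp
      rw [h5]
      exact mul_le_mul_of_nonneg_left (h4.trans ht) (hp i))
  have hz := hy.trans (hup y)
  rw [Finset.sum_sub_distrib, ← Finset.sum_mul] at hz
  have : (∑ i, p i) * (2 * c / R) ≤ ε / 2 := by
    rw [div_lt_iff₀ hε] at hR
    rw [mul_div_assoc', div_le_iff₀ hR0]
    linarith
  linarith

lemma step_int (M a : ℝ) (h1 : -M ≤ a) (h2 : a ≤ M) :
    IntervalIntegrable (fun t : ℝ => if t < a then (1 : ℝ) else 0) volume (-M) M ∧
    ∫ t in (-M)..M, (if t < a then (1 : ℝ) else 0) = a + M := by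
  have e : (fun t : ℝ => if t < a then (1 : ℝ) else 0) =
      (Set.Iio a).indicator (fun _ => (1 : ℝ)) := by
    ext t; simp [Set.indicator_apply]
  have hi : ∀ x y : ℝ, IntervalIntegrable (fun t : ℝ => if t < a then (1 : ℝ) else 0) volume x y := by
    intro x y
    rw [e, intervalIntegrable_iff]
    exact (integrableOn_const (by simp)).indicator measurableSet_Iio
  refine ⟨hi _ _, ?_⟩
  rw [← intervalIntegral.integral_add_adjacent_intervals (hi (-M) a) (hi a M)]
  have i1 : ∫ t in (-M)..a, (if t < a then (1 : ℝ) else 0) = ∫ t in (-M)..a, (1 : ℝ) := by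
    apply intervalIntegral.integral_congr_ae
    have : ∀ᵐ t : ℝ, t ≠ a := by simp [ae_iff]
    filter_upwards [this] with t ht hm
    rw [Set.uIoc_of_le h1] at hm
    rw [if_pos (lt_of_le_of_ne hm.2 ht)]
  have i2 : ∫ t in a..M, (if t < a then (1 : ℝ) else 0) = ∫ t in a..M, (0 : ℝ) := by
    apply intervalIntegral.integral_congr
    intro t ht
    rw [Set.uIcc_of_le h2] at ht
    simp [not_lt.2 ht.1]
  rw [i1, i2]; simp

lemma coarea {V I J : Type} [Fintype V] [Fintype I] [Fintype J] (c : I → V → ℝ)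
    (hc : ∀ i, ∑ z, c i z = 0) (p : I → ℝ) (hp : ∀ i, 0 ≤ p i) (q : J → ℝ)
    (a b : J → V)
    (hcut : ∀ φ : V → ℝ, (∀ z, φ z = 0 ∨ φ z = 1) →
      ∑ i, p i * |∑ z, c i z * φ z| ≤ ∑ j, q j * |φ (a j) - φ (b j)|) (φ : V → ℝ) :
    ∑ i, p i * |∑ z, c i z * φ z| ≤ ∑ j, q j * |φ (a j) - φ (b j)| := by
  set M := ∑ z, |φ z| with hM
  have hb : ∀ z, |φ z| ≤ M := fun z =>
    Finset.single_le_sum (f := fun z => |φ z|) (fun _ _ => abs_nonneg _) (mem_univ z)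
  have hM0 : 0 ≤ M := Finset.sum_nonneg fun _ _ => abs_nonneg _
  let χ : V → ℝ → ℝ := fun z t => if t < φ z then 1 else 0
  have hχ := fun z => step_int M (φ z) (abs_le.1 (hb z)).1 (abs_le.1 (hb z)).2
  have hgInt : ∀ i, IntervalIntegrable (fun t => ∑ z, c i z * χ z t) volume (-M) M := by
    intro i
    have := IntervalIntegrable.sum (μ := volume) (a := -M) (b := M) univ
      (f := fun z t => c i z * χ z t) (fun z _ => (hχ z).1.const_mul (c i z))
    have e : (fun t => ∑ z, c i z * χ z t) = ∑ z, fun t => c i z * χ z t := by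
      ext t; simp
    rw [e]; exact this
  have h1 : ∀ i, |∑ z, c i z * φ z| ≤ ∫ t in (-M)..M, |∑ z, c i z * χ z t| := by
    intro i
    have : ∑ z, c i z * φ z = ∫ t in (-M)..M, ∑ z, c i z * χ z t := by
      rw [intervalIntegral.integral_finsetSum (fun z _ => (hχ z).1.const_mul (c i z))]
      have : ∀ z, ∫ t in (-M)..M, c i z * χ z t = c i z * φ z + c i z * M := by
        intro z
        rw [intervalIntegral.integral_const_mul, (hχ z).2, mul_add]
      rw [Finset.sum_congr rfl fun z _ => this z, Finset.sum_add_distrib, ← Finset.sum_mul, hc]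
      simp
    rw [this]
    exact intervalIntegral.abs_integral_le_integral_abs (by linarith)
  have h2 : ∀ j, IntervalIntegrable (fun t => |χ (a j) t - χ (b j) t|) volume (-M) M ∧
      ∫ t in (-M)..M, |χ (a j) t - χ (b j) t| = |φ (a j) - φ (b j)| := by
    intro j
    refine ⟨((hχ _).1.sub (hχ _).1).abs, ?_⟩
    rcases le_total (φ (a j)) (φ (b j)) with h | h
    · have e : (fun t => |χ (a j) t - χ (b j) t|) = fun t => χ (b j) t - χ (a j) t := by
        ext t
        simp only [χ]
        split_ifs <;> first | linarith | (norm_num; done)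
      rw [e, intervalIntegral.integral_sub (hχ _).1 (hχ _).1, (hχ _).2, (hχ _).2,
        abs_of_nonpos (by linarith)]
      ring
    · have e : (fun t => |χ (a j) t - χ (b j) t|) = fun t => χ (a j) t - χ (b j) t := by
        ext t
        simp only [χ]
        split_ifs <;> first | linarith | (norm_num; done)
      rw [e, intervalIntegral.integral_sub (hχ _).1 (hχ _).1, (hχ _).2, (hχ _).2,
        abs_of_nonneg (by linarith)]
      ring
  calc ∑ i, p i * |∑ z, c i z * φ z| ≤ ∑ i, p i * ∫ t in (-M)..M, |∑ z, c i z * χ z t| :=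
        Finset.sum_le_sum fun i _ => mul_le_mul_of_nonneg_left (h1 i) (hp i)
    _ = ∫ t in (-M)..M, ∑ i, p i * |∑ z, c i z * χ z t| := by
        rw [intervalIntegral.integral_finsetSum (fun i _ => (hgInt i).abs.const_mul (p i))]
        simp only [intervalIntegral.integral_const_mul]
    _ ≤ ∫ t in (-M)..M, ∑ j, q j * |χ (a j) t - χ (b j) t| := by
        apply intervalIntegral.integral_mono_on (by linarith)
        · have := IntervalIntegrable.sum (μ := volume) (a := -M) (b := M) univ
            (f := fun i t => p i * |∑ z, c i z * χ z t|)
            (fun i _ => (hgInt i).abs.const_mul (p i))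
          have e : (fun t => ∑ i, p i * |∑ z, c i z * χ z t|) =
              ∑ i, fun t => p i * |∑ z, c i z * χ z t| := by
            ext t; simp
          rw [e]; exact this
        · have := IntervalIntegrable.sum (μ := volume) (a := -M) (b := M) univ
            (f := fun j t => q j * |χ (a j) t - χ (b j) t|)
            (fun j _ => (h2 j).1.const_mul (q j))
          have e : (fun t => ∑ j, q j * |χ (a j) t - χ (b j) t|) =
              ∑ j, fun t => q j * |χ (a j) t - χ (b j) t| := by
            ext t; simp
          rw [e]; exact this
        · intro t _
          refine hcut (fun z => χ z t) fun z => ?_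
          simp only [χ]
          split_ifs <;> simp
    _ = _ := by
        rw [intervalIntegral.integral_finsetSum (fun j _ => (h2 j).1.const_mul (q j))]
        simp only [intervalIntegral.integral_const_mul, (h2 _).2]

/-- Sign of a boolean. -/
def sg (b : Bool) : ℤ := if b then 1 else -1

lemma sign_avg {I : Type} [Fintype I] [DecidableEq I] (a : I → ℝ) :
    ∑ ε : I → Bool, |∑ c, (sg (ε c) : ℝ) * a c| ≤
      2 ^ Fintype.card I * Real.sqrt (∑ c, a c ^ 2) := by
  have orth : ∀ c d : I, ∑ ε : I → Bool, (sg (ε c) : ℝ) * (sg (ε d) : ℝ) =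
      if c = d then 2 ^ Fintype.card I else 0 := by
    intro c d
    split_ifs with h
    · subst h
      have : ∀ ε : I → Bool, (sg (ε c) : ℝ) * (sg (ε c) : ℝ) = 1 := by
        intro ε; cases ε c <;> simp [sg]
      simp [this]
    · let fl : (I → Bool) → (I → Bool) := fun ε => Function.update ε c (!ε c)
      have hfl : Function.Involutive fl := by
        intro ε
        ext x
        by_cases hx : x = c
        · subst hx; simp [fl]
        · simp [fl, hx]
      have hs : ∑ ε : I → Bool, (sg (ε c) : ℝ) * (sg (ε d) : ℝ) =
          ∑ ε : I → Bool, -((sg (ε c) : ℝ) * (sg (ε d) : ℝ)) := by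
        refine Fintype.sum_equiv hfl.toPerm _ _ fun ε => ?_
        have h1 : (fl ε) c = !ε c := by simp [fl]
        have h2 : (fl ε) d = ε d := by simp [fl, Ne.symm h]
        change _ = -((sg (fl ε c) : ℝ) * (sg (fl ε d) : ℝ))
        rw [h1, h2]
        cases ε c <;> cases ε d <;> simp [sg]
      rw [Finset.sum_neg_distrib] at hs
      linarith
  have hsq : ∑ ε : I → Bool, |∑ c, (sg (ε c) : ℝ) * a c| ^ 2 =
      2 ^ Fintype.card I * ∑ c, a c ^ 2 := by
    have : ∀ ε : I → Bool, |∑ c, (sg (ε c) : ℝ) * a c| ^ 2 =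
        ∑ c, ∑ d, (a c * a d) * ((sg (ε c) : ℝ) * (sg (ε d) : ℝ)) := by
      intro ε
      rw [sq_abs, sq, Finset.sum_mul_sum]
      refine Finset.sum_congr rfl fun c _ => Finset.sum_congr rfl fun d _ => by ring
    rw [Finset.sum_congr rfl fun ε _ => this ε, Finset.sum_comm, Finset.mul_sum]
    refine Finset.sum_congr rfl fun c _ => ?_
    rw [Finset.sum_comm]
    simp only [← Finset.mul_sum, orth]
    simp
    ring
  have hcs := sq_sum_le_card_mul_sum_sq (s := (univ : Finset (I → Bool)))
    (f := fun ε => |∑ c, (sg (ε c) : ℝ) * a c|)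
  rw [hsq] at hcs
  have hcard : ((univ : Finset (I → Bool)).card : ℝ) = 2 ^ Fintype.card I := by simp
  rw [hcard] at hcs
  apply le_of_sq_le_sq _ (by positivity) |>.trans le_rfl
  rw [mul_pow, Real.sq_sqrt (Finset.sum_nonneg fun _ _ => sq_nonneg _)]
  linarith

lemma geo_sum (n : ℕ) : ∀ (N : ℕ → ℕ) (X : ℝ), 
    (∀ j, (N j : ℝ) * (1 / 2) ^ j ≤ X) →
    ∑ j ∈ range n, (1 / 2 : ℝ) ^ j * Real.sqrt (N j) ≤ 2 * X / (2 - Real.sqrt 2) := by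
  have hs2 : Real.sqrt 2 ^ 2 = 2 := Real.sq_sqrt (by norm_num)
  have hs0 : 0 ≤ Real.sqrt 2 := Real.sqrt_nonneg 2
  have hs : Real.sqrt 2 < 2 := by nlinarith
  have hden : 0 < 2 - Real.sqrt 2 := by linarith
  induction n with
  | zero =>
    intro N X h
    have := h 0
    have : 0 ≤ X := le_trans (by positivity) this
    simp; positivity
  | succ n ih =>
    intro N X h
    have hX0 : 0 ≤ X := le_trans (by positivity) (h 0)
    by_cases h0 : N 0 = 0
    · rw [Finset.sum_range_succ', h0]
      have := ih (fun j => N (j + 1)) (2 * X) (by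
        intro j
        have := h (j + 1)
        rw [pow_succ] at this
        linarith)
      have e : ∑ j ∈ range n, (1 / 2 : ℝ) ^ (j + 1) * Real.sqrt (N (j + 1)) =
          (1 / 2) * ∑ j ∈ range n, (1 / 2 : ℝ) ^ j * Real.sqrt (N (j + 1)) := by
        rw [Finset.mul_sum]
        refine Finset.sum_congr rfl fun j _ => by rw [pow_succ]; ring
      rw [e]
      simp only [Nat.cast_zero, Real.sqrt_zero, mul_zero, add_zero]
      have e2 : 2 * (2 * X) / (2 - Real.sqrt 2) = 2 * (2 * X / (2 - Real.sqrt 2)) := by ring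
      rw [e2] at this
      linarith
    · have hX : 1 ≤ X := by
        have h1 : (1 : ℝ) ≤ N 0 := by exact_mod_cast Nat.one_le_iff_ne_zero.2 h0
        have := h 0
        simp at this
        linarith
      have ht : ∀ j, (1 / 2 : ℝ) ^ j * Real.sqrt (N j) ≤ X * (Real.sqrt 2 / 2) ^ j := by
        intro j
        apply le_of_sq_le_sq _ (by positivity)
        rw [mul_pow, Real.sq_sqrt (by positivity), mul_pow]
        have e : ((Real.sqrt 2 / 2) ^ j) ^ 2 = (1 / 2 : ℝ) ^ j := by
          rw [← pow_mul, mul_comm, pow_mul, div_pow, hs2]; norm_num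
        rw [e]
        have hj := h j
        have hpos : (0 : ℝ) < (1 / 2) ^ j := by positivity
        have hXX : X ≤ X ^ 2 := by nlinarith
        calc ((1 / 2 : ℝ) ^ j) ^ 2 * (N j) = (N j * (1 / 2) ^ j) * (1 / 2) ^ j := by ring
          _ ≤ X ^ 2 * (1 / 2) ^ j := by gcongr; linarith
      calc _ ≤ ∑ j ∈ range (n + 1), X * (Real.sqrt 2 / 2) ^ j :=
            Finset.sum_le_sum fun j _ => ht j
        _ = X * ∑ j ∈ range (n + 1), (Real.sqrt 2 / 2) ^ j := by rw [Finset.mul_sum]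
        _ ≤ X * (1 - Real.sqrt 2 / 2)⁻¹ := by
            gcongr
            have hq : Real.sqrt 2 / 2 < 1 := by linarith
            rw [← tsum_geometric_of_lt_one (by positivity) hq]
            exact (summable_geometric_of_lt_one (by positivity) hq).sum_le_tsum _
              (fun _ _ => by positivity)
        _ = _ := by
            have : 1 - Real.sqrt 2 / 2 = (2 - Real.sqrt 2) / 2 := by ring
            rw [this, inv_div]; ring

lemma cut_bound {V I J : Type} [Fintype I] [DecidableEq I] [Fintype J] (n : ℕ)
    (jj : I → ℕ) (a b : I → V) (x y : J → V) (th : J → ℝ)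
    (φ : V → ℝ) (hφ : ∀ z, φ z = 0 ∨ φ z = 1)
    (hv : ∀ k, ∑ c, (if jj c = k then (1 / 2 : ℝ) ^ k * |φ (a c) - φ (b c)| else 0) ≤
      2 * ∑ f, th f * |φ (x f) - φ (y f)|) :
    ∑ k ∈ range n, ∑ ε : I → Bool, (1 / 2 : ℝ) ^ k * ((2 : ℝ) ^ Fintype.card I)⁻¹ *
      |∑ c, (sg (ε c) : ℝ) * (if jj c = k then φ (a c) - φ (b c) else 0)| ≤
      4 / (2 - Real.sqrt 2) * ∑ f, th f * |φ (x f) - φ (y f)| := by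
  classical
  set W := ∑ f, th f * |φ (x f) - φ (y f)|
  let N : ℕ → ℕ := fun k => (univ.filter fun c => jj c = k ∧ φ (a c) ≠ φ (b c)).card
  have hsq : ∀ k, ∑ c, (if jj c = k then φ (a c) - φ (b c) else 0) ^ 2 = (N k : ℝ) := by
    intro k
    simp only [N, Finset.card_filter]
    push_cast
    refine Finset.sum_congr rfl fun c _ => ?_
    rcases hφ (a c) with h | h <;> rcases hφ (b c) with h' | h' <;>
      by_cases hk : jj c = k <;> simp [h, h', hk]
  have habs : ∀ k, ∑ c, (if jj c = k then (1 / 2 : ℝ) ^ k * |φ (a c) - φ (b c)| else 0) =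
      N k * (1 / 2) ^ k := by
    intro k
    simp only [N, Finset.card_filter]
    push_cast
    rw [Finset.sum_mul]
    refine Finset.sum_congr rfl fun c _ => ?_
    rcases hφ (a c) with h | h <;> rcases hφ (b c) with h' | h' <;>
      by_cases hk : jj c = k <;> simp [h, h', hk]
  have := geo_sum n N (2 * W) (fun k => by rw [← habs]; exact hv k)
  calc _ ≤ ∑ k ∈ range n, (1 / 2 : ℝ) ^ k * Real.sqrt (N k) := by
        refine Finset.sum_le_sum fun k _ => ?_
        rw [← Finset.mul_sum]
        have h := sign_avg (fun c => if jj c = k then φ (a c) - φ (b c) else 0)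
        rw [hsq] at h
        calc _ ≤ (1 / 2 : ℝ) ^ k * ((2 : ℝ) ^ Fintype.card I)⁻¹ *
              (2 ^ Fintype.card I * Real.sqrt (N k)) := by gcongr
          _ = _ := by field_simp
    _ ≤ _ := this
    _ = _ := by ring

/-- Function values that agree along edges are constant. -/
def FConn (G : WGraph) : Prop :=
  ∀ g : G.V → ℝ, (∀ f, g (G.src f) = g (G.dst f)) → ∀ x y, g x = g y

lemma walk_of_fconn {G : WGraph} (h : FConn G) (x y : G.V) : ∃ l, G.IsWalk x y l := by
  classical
  have h1 := h (fun z => if ∃ l, G.IsWalk z y l then 1 else 0) (by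
    intro f
    have : (∃ l, G.IsWalk (G.src f) y l) ↔ ∃ l, G.IsWalk (G.dst f) y l := by
      constructor
      · rintro ⟨l, hl⟩
        exact ⟨(f, false) :: l, by simp [WGraph.IsWalk, WGraph.stepSrc, WGraph.stepDst, hl]⟩
      · rintro ⟨l, hl⟩
        exact ⟨(f, true) :: l, by simp [WGraph.IsWalk, WGraph.stepSrc, WGraph.stepDst, hl]⟩
    simp only [this]) x y
  by_contra hx
  have hy : ∃ l, G.IsWalk y y l := ⟨[], rfl⟩
  simp [hx, hy] at h1

lemma fconn_of_walk {G : WGraph} (h : ∀ x y : G.V, ∃ l, G.IsWalk x y l) : FConn G := by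
  intro g hg x y
  obtain ⟨l, hl⟩ := h x y
  induction l generalizing x with
  | nil => rw [show x = y from hl]
  | cons p l ih =>
    obtain ⟨h1, h2⟩ := hl
    rw [← ih _ h2, ← h1]
    unfold WGraph.stepSrc WGraph.stepDst
    split_ifs
    · exact hg _
    · exact (hg _).symm

lemma walk_lip {G : WGraph} (g : G.V → ℝ) (hg : ∀ f, |g (G.src f) - g (G.dst f)| ≤ G.len f)
    (x y : G.V) (l : List (G.ι × Bool)) (hl : G.IsWalk x y l) :
    g x - g y ≤ (l.map fun p => G.len p.1).sum := by
  induction l generalizing x with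
  | nil => rw [show x = y from hl]; simp
  | cons p l ih =>
    obtain ⟨h1, h2⟩ := hl
    have h3 := ih _ h2
    have h4 := abs_le.1 (hg p.1)
    have h5 : g x - g (G.stepDst p) ≤ G.len p.1 := by
      rw [← h1]
      unfold WGraph.stepSrc WGraph.stepDst
      split_ifs <;> linarith [h4.1, h4.2]
    simp only [List.map_cons, List.sum_cons]
    linarith

lemma lip_gdist {G : WGraph} (hc : FConn G) (g : G.V → ℝ)
    (hg : ∀ f, |g (G.src f) - g (G.dst f)| ≤ G.len f) (x y : G.V) :
    g x - g y ≤ G.gdist x y := by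
  obtain ⟨l, hl⟩ := walk_of_fconn hc x y
  refine le_csInf ⟨_, l, hl, rfl⟩ ?_
  rintro c ⟨l, hl, rfl⟩
  exact walk_lip g hg x y l hl

lemma walk_bdd {G : WGraph} (hp : ∀ f, 0 < G.len f) (x y : G.V) :
    ∀ c ∈ { c : ℝ | ∃ l : List (G.ι × Bool), G.IsWalk x y l ∧
    c = (l.map fun p => G.len p.1).sum }, 0 ≤ c := by
  rintro c ⟨l, -, rfl⟩
  refine List.sum_nonneg fun z hz => ?_
  obtain ⟨p, -, rfl⟩ := List.mem_map.1 hz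
  exact (hp _).le

lemma gdist_nonneg {G : WGraph} (hp : ∀ f, 0 < G.len f) (x y : G.V) : 0 ≤ G.gdist x y :=
  Real.sInf_nonneg (walk_bdd hp x y)

lemma gdist_edge {G : WGraph} (hp : ∀ f, 0 < G.len f) (f : G.ι) :
    G.gdist (G.src f) (G.dst f) ≤ G.len f := by
  refine csInf_le ⟨0, walk_bdd hp _ _⟩ ⟨[(f, true)], ?_, by simp⟩
  simp [WGraph.IsWalk, WGraph.stepSrc, WGraph.stepDst]

lemma gdist_self {G : WGraph} (hp : ∀ f, 0 < G.len f) (x : G.V) : G.gdist x x = 0 := by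
  refine le_antisymm ?_ (gdist_nonneg hp _ _)
  exact csInf_le ⟨0, walk_bdd hp _ _⟩ ⟨[], rfl, by simp⟩

lemma gdist_lip {G : WGraph} (hp : ∀ f, 0 < G.len f) (hc : FConn G) (z : G.V) (f : G.ι) :
    |G.gdist (G.src f) z - G.gdist (G.dst f) z| ≤ G.len f := by
  have key : ∀ p : G.ι × Bool,
      G.gdist (G.stepSrc p) z ≤ G.len p.1 + G.gdist (G.stepDst p) z := by
    intro p
    rw [← sub_le_iff_le_add']
    obtain ⟨l, hl⟩ := walk_of_fconn hc (G.stepDst p) z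
    refine le_csInf ⟨_, l, hl, rfl⟩ ?_
    rintro c ⟨l, hl, rfl⟩
    rw [sub_le_iff_le_add']
    exact csInf_le ⟨0, walk_bdd hp _ _⟩ ⟨p :: l, ⟨rfl, hl⟩, by simp⟩
  have h1 := key (f, true)
  have h2 := key (f, false)
  simp only [WGraph.stepSrc, WGraph.stepDst, if_true, Bool.false_eq_true, if_false] at h1 h2
  rw [abs_le]
  constructor <;> linarith

lemma TC_le_single {V : Type} [Fintype V] [DecidableEq V] (d : V → V → ℝ)
    (hd : ∀ x y, 0 ≤ d x y) (x y : V) :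
    TCnorm d (fun z => (if x = z then (1 : ℝ) else 0) - (if y = z then (1 : ℝ) else 0)) ≤ d x y := by
  refine csInf_le ⟨0, ?_⟩ ⟨1, fun _ => 1, fun _ => x, fun _ => y, by simp, by simp, by simp⟩
  rintro c ⟨n, a, x, y, h1, -, rfl⟩
  exact Finset.sum_nonneg fun i _ => mul_nonneg (h1 i) (hd _ _)

/-- A plan through a base point. -/
lemma TC_plan {V : Type} [Fintype V] [DecidableEq V] (d : V → V → ℝ) (μ : V → ℝ)
    (hμ : ∑ z, μ z = 0) (o : V) :
    (∑ z, |μ z| * (if 0 ≤ μ z then d z o else d o z)) ∈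
    { c : ℝ | ∃ (n : ℕ) (a : Fin n → ℝ) (x y : Fin n → V),
    (∀ i, 0 ≤ a i) ∧
    (∀ z : V, μ z = ∑ i, a i * ((if x i = z then (1 : ℝ) else 0) -
      (if y i = z then (1 : ℝ) else 0))) ∧
    c = ∑ i, a i * d (x i) (y i) } := by
  let e := Fintype.equivFin V
  refine ⟨Fintype.card V, fun i => |μ (e.symm i)|,
    fun i => if 0 ≤ μ (e.symm i) then e.symm i else o,
    fun i => if 0 ≤ μ (e.symm i) then o else e.symm i, fun i => abs_nonneg _, ?_, ?_⟩
  · intro z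
    rw [Fintype.sum_equiv e.symm _ (fun v => |μ v| * ((if (if 0 ≤ μ v then v else o) = z
      then (1 : ℝ) else 0) - (if (if 0 ≤ μ v then o else v) = z then (1 : ℝ) else 0)))
      (fun i => rfl)]
    have : ∀ v, |μ v| * ((if (if 0 ≤ μ v then v else o) = z
      then (1 : ℝ) else 0) - (if (if 0 ≤ μ v then o else v) = z then (1 : ℝ) else 0)) =
      μ v * (if v = z then 1 else 0) - μ v * (if o = z then 1 else 0) := by
      intro v
      by_cases h : 0 ≤ μ v
      · simp only [h, if_true, abs_of_nonneg h]; ring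
      · simp only [h, if_false, abs_of_neg (not_le.1 h)]; ring
    rw [Finset.sum_congr rfl fun v _ => this v, Finset.sum_sub_distrib, ← Finset.sum_mul, hμ]
    simp
  · rw [Fintype.sum_equiv e.symm _ (fun v => |μ v| * d (if 0 ≤ μ v then v else o)
      (if 0 ≤ μ v then o else v)) (fun i => rfl)]
    refine Finset.sum_congr rfl fun v _ => ?_
    split_ifs <;> rfl

lemma TC_lower {V : Type} [Fintype V] [DecidableEq V] (d : V → V → ℝ) (μ : V → ℝ)
    (hμ : ∑ z, μ z = 0) (o : V) (g : V → ℝ) (hg : ∀ x y, g x - g y ≤ d x y) :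
    ∑ z, g z * μ z ≤ TCnorm d μ := by
  refine le_csInf ⟨_, TC_plan d μ hμ o⟩ ?_
  rintro c ⟨n, a, x, y, h1, h2, rfl⟩
  have : ∑ z, g z * μ z = ∑ i, a i * (g (x i) - g (y i)) := by
    simp only [h2, Finset.mul_sum]
    rw [Finset.sum_comm]
    refine Finset.sum_congr rfl fun i _ => ?_
    have : ∀ z, g z * (a i * ((if x i = z then (1 : ℝ) else 0) - if y i = z then 1 else 0)) =
      a i * (if x i = z then g z else 0) - a i * (if y i = z then g z else 0) := by
      intro z; split_ifs <;> ring
    rw [Finset.sum_congr rfl fun z _ => this z, Finset.sum_sub_distrib, ← Finset.mul_sum,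
      ← Finset.mul_sum]
    simp [mul_sub]
  rw [this]
  exact Finset.sum_le_sum fun i _ => mul_le_mul_of_nonneg_left (hg _ _) (h1 i)

/-- Abstract properties of the building block `H`. -/
structure GoodH (H : WGraph) (cyc : H.ι → ℕ) (ρ h : H.V → ℝ) (u₁ u₂ : H.V) (κ : ℝ) : Prop where
  st : H.s ≠ H.t
  len_pos : ∀ f, 0 < H.len f
  th_eq : ∀ f, H.th f = (1 / 2) ^ (cyc f)
  cyc_le : ∀ f, cyc f ≤ 1
  rho_s : ρ H.s = 1
  rho_t : ρ H.t = 0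
  rho_lip : ∀ f, |ρ (H.src f) - ρ (H.dst f)| ≤ H.len f
  h_s : h H.s = 0
  h_t : h H.t = 0
  h_lip : ∀ f, |h (H.src f) - h (H.dst f)| ≤ H.len f
  h_zero : ∀ f, cyc f = 0 → h (H.src f) = h (H.dst f)
  h_val : h u₁ - h u₂ = κ
  flow : ∀ ψ : H.V → ℝ, |ψ H.s - ψ H.t| ≤ ∑ f, H.th f * |ψ (H.src f) - ψ (H.dst f)|
  cycl : ∀ ψ : H.V → ℝ, |ψ u₁ - ψ u₂| ≤
    2 * ∑ f, if cyc f = 1 then H.th f * |ψ (H.src f) - ψ (H.dst f)| else 0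
  sum_one : ∑ f, H.th f * H.len f = 1
  conn : FConn H

/-- The inductive invariant for slash powers. -/
structure GoodG (G : WGraph) (n : ℕ) (lev : G.ι → ℕ) (I : Type) [Fintype I]
    (j : I → ℕ) (ℓ : I → ℝ) (a b : I → G.V) (κ : ℝ) : Prop where
  len_pos : ∀ f, 0 < G.len f
  th_eq : ∀ f, G.th f = (1 / 2) ^ (lev f)
  conn : FConn G
  sum_one : ∑ f, G.th f * G.len f = 1
  lev_le : ∀ f, lev f ≤ n
  j_lt : ∀ c, j c < n
  tot : ∑ c, (1 / 2 : ℝ) ^ (j c) * ℓ c = n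
  var : ∀ (φ : G.V → ℝ) (k : ℕ),
    ∑ c, (if j c = k then (1 / 2 : ℝ) ^ k * |φ (a c) - φ (b c)| else 0) ≤
      2 * ∑ f, if k < lev f then G.th f * |φ (G.src f) - φ (G.dst f)| else 0
  wit : ∀ (k : ℕ) (ε : I → ℝ), (∀ c, |ε c| ≤ 1) → ∃ g : G.V → ℝ,
    (∀ f, |g (G.src f) - g (G.dst f)| ≤ G.len f) ∧
    (∀ f, lev f ≤ k → g (G.src f) = g (G.dst f)) ∧
    ∀ c, j c = k → g (a c) - g (b c) = ε c * κ * ℓ c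

lemma goodG_zero (κ : ℝ) : GoodG WGraph.edgeGraph 0 (fun _ => 0) Empty (fun _ => 0) (fun _ => 0)
    (fun _ => WGraph.edgeGraph.s) (fun _ => WGraph.edgeGraph.s) κ where
  len_pos := fun _ => one_pos
  th_eq := fun _ => by simp [WGraph.edgeGraph]
  conn := by
    intro g hg x y
    have : g false = g true := hg ()
    change Bool at x y
    cases x <;> cases y <;> simp [this]
  sum_one := by
    change ∑ f : Unit, (1 : ℝ) * 1 = 1
    simp
  lev_le := fun _ => le_rfl
  j_lt := fun c => c.elim
  tot := by simp
  var := by intro φ k; simp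
  wit := by
    intro k ε _
    refine ⟨fun _ => 0, fun _ => ?_, fun _ _ => rfl, fun c => c.elim⟩
    simp [WGraph.edgeGraph]

lemma slash_sum {G H : WGraph} (F : G.ι × H.ι → ℝ) :
    @Finset.sum (G.slash H).ι ℝ _ (@Finset.univ _ (G.slash H).finι) F = ∑ e, ∑ f, F (e, f) :=
  Fintype.sum_prod_type F

lemma slashEmbed_elim {G H : WGraph} (st : H.s ≠ H.t) (g : G.V → ℝ) (ψ : G.ι → H.V → ℝ)
    (hs : ∀ e, ψ e H.s = g (G.src e)) (ht : ∀ e, ψ e H.t = g (G.dst e)) (e : G.ι) (v : H.V) :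
    Sum.elim g (fun q : G.ι × {v : H.V // v ≠ H.s ∧ v ≠ H.t} => ψ q.1 q.2.1)
      (WGraph.slashEmbed G H e v) = ψ e v := by
  unfold WGraph.slashEmbed
  split_ifs with h1 h2
  · rw [h1, hs]; rfl
  · rw [h2, ht]; rfl
  · rfl

lemma slashEmbed_s {G H : WGraph} (e : G.ι) :
    WGraph.slashEmbed G H e H.s = Sum.inl (G.src e) := by simp [WGraph.slashEmbed]

lemma slashEmbed_t {G H : WGraph} (st : H.s ≠ H.t) (e : G.ι) :
    WGraph.slashEmbed G H e H.t = Sum.inl (G.dst e) := by simp [WGraph.slashEmbed, st.symm]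

lemma goodG_step {G H : WGraph} {cyc : H.ι → ℕ} {ρ h : H.V → ℝ} {u₁ u₂ : H.V} {κ : ℝ}
    (hH : GoodH H cyc ρ h u₁ u₂ κ) {n : ℕ} {lev : G.ι → ℕ} {I : Type} [Fintype I]
    {j : I → ℕ} {ℓ : I → ℝ} {a b : I → G.V} (hG : GoodG G n lev I j ℓ a b κ) :
    GoodG (G.slash H) (n + 1) (fun p : G.ι × H.ι => lev p.1 + cyc p.2) (I ⊕ G.ι)
      (Sum.elim j lev) (Sum.elim ℓ G.len)
      (Sum.elim (fun c => Sum.inl (a c)) (fun e => WGraph.slashEmbed G H e u₁))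
      (Sum.elim (fun c => Sum.inl (b c)) (fun e => WGraph.slashEmbed G H e u₂)) κ where
  len_pos := fun p => mul_pos (hG.len_pos _) (hH.len_pos _)
  th_eq := fun p => by
    rw [pow_add, ← hG.th_eq, ← hH.th_eq]; rfl
  conn := by
    intro g hg
    have h1 : ∀ e, ∀ x y : H.V, g (WGraph.slashEmbed G H e x) = g (WGraph.slashEmbed G H e y) :=
      fun e => hH.conn (fun v => g (WGraph.slashEmbed G H e v)) (fun f => hg (e, f))
    have h2 : ∀ x y : G.V, g (Sum.inl x) = g (Sum.inl y) := by
      refine hG.conn (fun v => g (Sum.inl v)) fun e => ?_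
      have := h1 e H.s H.t
      rwa [slashEmbed_s, slashEmbed_t hH.st] at this
    have h3 : ∀ x : (G.slash H).V, g x = g (Sum.inl G.s) := by
      intro x
      rcases x with x | ⟨e, v, hv1, hv2⟩
      · exact h2 _ _
      · have h4 := h1 e v H.s
        rw [slashEmbed_s] at h4
        have h5 : WGraph.slashEmbed G H e v = Sum.inr (e, ⟨v, hv1, hv2⟩) := by
          simp [WGraph.slashEmbed, hv1, hv2]
        rw [h5] at h4
        exact h4.trans (h2 _ _)
    intro x y
    rw [h3, h3 y]
  sum_one := by
    refine (slash_sum (fun p => (G.th p.1 * H.th p.2) * (G.len p.1 * H.len p.2))).trans ?_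
    have : ∀ e, ∑ f, (G.th e * H.th f) * (G.len e * H.len f) = G.th e * G.len e := by
      intro e
      have : ∀ f, (G.th e * H.th f) * (G.len e * H.len f) =
        (G.th e * G.len e) * (H.th f * H.len f) := fun f => by ring
      rw [Finset.sum_congr rfl fun f _ => this f, ← Finset.mul_sum, hH.sum_one, mul_one]
    rw [Finset.sum_congr rfl fun e _ => this e, hG.sum_one]
  lev_le := fun p => add_le_add (hG.lev_le _) (hH.cyc_le _)
  j_lt := by
    rintro (c | e)
    · exact (hG.j_lt c).trans (Nat.lt_succ_self _)
    · exact Nat.lt_succ_of_le (hG.lev_le e)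
  tot := by
    rw [Fintype.sum_sum_type]
    simp only [Sum.elim_inl, Sum.elim_inr]
    rw [hG.tot]
    simp only [← hG.th_eq, hG.sum_one]
    push_cast; ring
  var := by
    intro φ k
    rw [Fintype.sum_sum_type]
    simp only [Sum.elim_inl, Sum.elim_inr]
    have h1 := hG.var (fun v => φ (Sum.inl v)) k
    have key : (2 * ∑ e, if k < lev e then G.th e * |φ (Sum.inl (G.src e)) - φ (Sum.inl (G.dst e))| else 0) +
        (∑ e, if lev e = k then (1 / 2 : ℝ) ^ k * |φ (WGraph.slashEmbed G H e u₁) -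
          φ (WGraph.slashEmbed G H e u₂)| else 0) ≤
        2 * ∑ e, ∑ f, if k < lev e + cyc f then (G.th e * H.th f) *
          |φ (WGraph.slashEmbed G H e (H.src f)) - φ (WGraph.slashEmbed G H e (H.dst f))| else 0 := by
      rw [Finset.mul_sum, Finset.mul_sum, ← Finset.sum_add_distrib]
      refine Finset.sum_le_sum fun e _ => ?_
      have hth : 0 ≤ G.th e := by rw [hG.th_eq]; positivity
      have hfl := hH.flow (fun v => φ (WGraph.slashEmbed G H e v))
      have hcy := hH.cycl (fun v => φ (WGraph.slashEmbed G H e v))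
      simp only [slashEmbed_s, slashEmbed_t hH.st] at hfl
      rcases lt_trichotomy k (lev e) with hk | hk | hk
      · rw [if_pos hk, if_neg hk.ne', add_zero]
        gcongr
        calc _ ≤ G.th e * _ := mul_le_mul_of_nonneg_left hfl hth
          _ = _ := by
            rw [Finset.mul_sum]
            refine Finset.sum_congr rfl fun f _ => ?_
            rw [if_pos (by omega)]; ring
      · rw [if_neg (by omega), if_pos hk.symm, mul_zero, zero_add]
        have : (1 / 2 : ℝ) ^ k = G.th e := by rw [hG.th_eq, hk]
        rw [this]
        calc _ ≤ G.th e * _ := mul_le_mul_of_nonneg_left hcy hth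
          _ = _ := by
            rw [mul_left_comm, Finset.mul_sum]
            congr 1
            refine Finset.sum_congr rfl fun f _ => ?_
            have := hH.cyc_le f
            by_cases hc : cyc f = 1
            · rw [if_pos hc, if_pos (by omega)]; ring
            · rw [if_neg hc, if_neg (by omega), mul_zero]
      · rw [if_neg (by omega), if_neg (by omega)]
        simp only [mul_zero, add_zero]
        refine mul_nonneg zero_le_two (Finset.sum_nonneg fun f _ => ?_)
        have : 0 ≤ H.th f := by rw [hH.th_eq]; positivity
        split_ifs <;> positivity
    refine le_trans ((add_le_add_left h1 _).trans key) (le_of_eq ?_)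
    congr 1
    exact (slash_sum (fun p => if k < lev p.1 + cyc p.2 then (G.th p.1 * H.th p.2) *
          |φ (WGraph.slashEmbed G H p.1 (H.src p.2)) -
            φ (WGraph.slashEmbed G H p.1 (H.dst p.2))| else 0)).symm
  wit := by
    intro k ε hε
    obtain ⟨g, hg1, hg2, hg3⟩ := hG.wit k (fun c => ε (Sum.inl c)) (fun c => hε _)
    let ψ : G.ι → H.V → ℝ := fun e v => g (G.dst e) + (g (G.src e) - g (G.dst e)) * ρ v +
      (if lev e = k then ε (Sum.inr e) * G.len e * h v else 0)
    have hs : ∀ e, ψ e H.s = g (G.src e) := by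
      intro e; simp [ψ, hH.rho_s, hH.h_s]
    have ht : ∀ e, ψ e H.t = g (G.dst e) := by
      intro e; simp [ψ, hH.rho_t, hH.h_t]
    have hE := slashEmbed_elim hH.st g ψ hs ht
    refine ⟨Sum.elim g (fun q : G.ι × {v : H.V // v ≠ H.s ∧ v ≠ H.t} => ψ q.1 q.2.1), ?_, ?_, ?_⟩
    · rintro ⟨e, f⟩
      change |Sum.elim g _ (WGraph.slashEmbed G H e (H.src f)) -
        Sum.elim g _ (WGraph.slashEmbed G H e (H.dst f))| ≤ G.len e * H.len f
      rw [hE, hE]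
      have hl := hG.len_pos e
      by_cases hk : lev e = k
      · have h0 := hg2 e hk.le
        have : ψ e (H.src f) - ψ e (H.dst f) =
            ε (Sum.inr e) * (G.len e * (h (H.src f) - h (H.dst f))) := by
          simp only [ψ, if_pos hk, h0]; ring
        rw [this, abs_mul, abs_mul, abs_of_pos hl]
        calc _ ≤ 1 * (G.len e * H.len f) := by
              gcongr
              · exact hε _
              · exact hH.h_lip f
          _ = _ := one_mul _
      · have : ψ e (H.src f) - ψ e (H.dst f) =
            (g (G.src e) - g (G.dst e)) * (ρ (H.src f) - ρ (H.dst f)) := by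
          simp only [ψ, if_neg hk]; ring
        rw [this, abs_mul]
        gcongr
        · exact hg1 e
        · exact hH.rho_lip f
    · rintro ⟨e, f⟩ hle
      change Sum.elim g _ (WGraph.slashEmbed G H e (H.src f)) =
        Sum.elim g _ (WGraph.slashEmbed G H e (H.dst f))
      rw [hE, hE]
      change lev e + cyc f ≤ k at hle
      have h0 := hg2 e (by omega)
      simp only [ψ, h0]
      by_cases hk : lev e = k
      · rw [hH.h_zero f (by omega)]; ring
      · simp [hk]
    · rintro (c | e) hc
      · exact hg3 c hc
      · change lev e = k at hc
        change Sum.elim g _ (WGraph.slashEmbed G H e u₁) -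
          Sum.elim g _ (WGraph.slashEmbed G H e u₂) = ε (Sum.inr e) * κ * G.len e
        rw [hE, hE]
        have h0 := hg2 e hc.le
        simp only [ψ, h0, if_pos hc, ← hH.h_val]
        ring

lemma goodG_pow {H : WGraph} {cyc : H.ι → ℕ} {ρ h : H.V → ℝ} {u₁ u₂ : H.V} {κ : ℝ}
    (hH : GoodH H cyc ρ h u₁ u₂ κ) (n : ℕ) :
    ∃ (lev : (H.slashPow n).ι → ℕ) (I : Type) (_ : Fintype I) (j : I → ℕ) (ℓ : I → ℝ)
      (a b : I → (H.slashPow n).V), GoodG (H.slashPow n) n lev I j ℓ a b κ := by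
  induction n with
  | zero => exact ⟨_, _, _, _, _, _, _, goodG_zero κ⟩
  | succ n ih =>
    obtain ⟨lev, I, _, j, ℓ, a, b, hG⟩ := ih
    exact ⟨_, _, _, _, _, _, _, goodG_step hH hG⟩

lemma TC_nonneg {V : Type} [Fintype V] [DecidableEq V] (d : V → V → ℝ)
    (hd : ∀ x y, 0 ≤ d x y) (μ : V → ℝ) : 0 ≤ TCnorm d μ := by
  apply Real.sInf_nonneg
  rintro c ⟨n, a, x, y, h1, -, rfl⟩
  exact Finset.sum_nonneg fun i _ => mul_nonneg (h1 i) (hd _ _)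

lemma c1_set_nonempty {G : WGraph} (hp : ∀ f, 0 < G.len f) (hc : FConn G) :
    ∃ D : ℝ, 1 ≤ D ∧ ∃ (Ω : Type) (_ : MeasurableSpace Ω) (ν : Measure Ω)
    (f : {μ : G.V → ℝ // ∑ x, μ x = 0} → Lp ℝ 1 ν), ∀ μ μ',
      TCnorm G.gdist (fun x => μ.1 x - μ'.1 x) ≤ dist (f μ) (f μ') ∧
      dist (f μ) (f μ') ≤ D * TCnorm G.gdist (fun x => μ.1 x - μ'.1 x) := by
  classical
  have hd := gdist_nonneg hp
  let o := G.s
  set M := ∑ z, (G.gdist z o + G.gdist o z) with hM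
  have hM0 : 0 ≤ M := Finset.sum_nonneg fun z _ => add_nonneg (hd _ _) (hd _ _)
  have hup : ∀ μ : G.V → ℝ, ∑ x, μ x = 0 → TCnorm G.gdist μ ≤ M * ∑ z, |μ z| := by
    intro μ hμ
    refine (csInf_le ⟨0, ?_⟩ (TC_plan G.gdist μ hμ o)).trans ?_
    · rintro c ⟨n, a, x, y, h1, -, rfl⟩
      exact Finset.sum_nonneg fun i _ => mul_nonneg (h1 i) (hd _ _)
    · rw [Finset.mul_sum]
      refine Finset.sum_le_sum fun z _ => ?_
      rw [mul_comm]
      gcongr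
      have : G.gdist z o + G.gdist o z ≤ M :=
        Finset.single_le_sum (f := fun z => G.gdist z o + G.gdist o z)
          (fun z _ => add_nonneg (hd _ _) (hd _ _)) (mem_univ z)
      have h1 := hd z o
      have h2 := hd o z
      split_ifs <;> linarith
  obtain ⟨m, hm, hml⟩ : ∃ m : ℝ, 0 < m ∧ ∀ f, m ≤ G.len f := by
    have hs : 0 ≤ ∑ f, (G.len f)⁻¹ := Finset.sum_nonneg fun f _ => (inv_pos.2 (hp f)).le
    refine ⟨(1 + ∑ f, (G.len f)⁻¹)⁻¹, by positivity, fun f => ?_⟩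
    rw [inv_le_comm₀ (by positivity) (hp f)]
    have := Finset.single_le_sum (f := fun f => (G.len f)⁻¹)
      (fun f _ => (inv_pos.2 (hp f)).le) (mem_univ f)
    linarith
  have hlow : ∀ μ : G.V → ℝ, ∑ x, μ x = 0 → ∀ z, m * |μ z| ≤ TCnorm G.gdist μ := by
    intro μ hμ z
    have key : ∀ σ : ℝ, |σ| = 1 → σ * m * μ z ≤ TCnorm G.gdist μ := by
      intro σ hσ
      have := TC_lower G.gdist μ hμ o (fun x => if x = z then σ * m else 0)
        (lip_gdist hc _ (by
          intro f
          refine le_trans ?_ (hml f)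
          split_ifs <;> simp [abs_mul, hσ, abs_of_pos hm, hm.le]))
      simpa using this
    rcases abs_choice (μ z) with h | h
    · have := key 1 (by simp); rw [h]; linarith
    · have := key (-1) (by simp); rw [h]; linarith
  letI : MeasurableSpace G.V := ⊤
  haveI : MeasurableSingletonClass G.V := ⟨fun _ => trivial⟩
  have hgInt : ∀ g : G.V → ℝ, Integrable g (Measure.count : Measure G.V) := fun g =>
    Integrable.of_finite
  set D := max 1 (M * (Fintype.card G.V / m)) with hD
  refine ⟨D, le_max_left _ _, G.V, ⊤, Measure.count,
    fun μ => (hgInt (fun z => M * μ.1 z)).toL1 _, fun μ μ' => ?_⟩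
  have hz : ∑ x, (μ.1 x - μ'.1 x) = 0 := by
    rw [Finset.sum_sub_distrib, μ.2, μ'.2, sub_zero]
  have hdist : dist ((hgInt (fun z => M * μ.1 z)).toL1 _) ((hgInt (fun z => M * μ'.1 z)).toL1 _) =
      M * ∑ z, |μ.1 z - μ'.1 z| := by
    rw [dist_eq_norm, ← Integrable.toL1_sub, L1.norm_of_fun_eq_integral_norm]
    rw [integral_fintype (hgInt _).norm, Finset.mul_sum]
    refine Finset.sum_congr rfl fun z _ => ?_
    simp [Measure.real, ← mul_sub, abs_mul, abs_of_nonneg hM0]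
  rw [hdist]
  refine ⟨hup _ hz, ?_⟩
  have hT := TC_nonneg G.gdist hd (fun x => μ.1 x - μ'.1 x)
  calc M * ∑ z, |μ.1 z - μ'.1 z| ≤
      M * ∑ z : G.V, (TCnorm G.gdist (fun x => μ.1 x - μ'.1 x) / m) := by
        gcongr with z
        rw [le_div_iff₀ hm, mul_comm]
        exact hlow _ hz z
    _ = M * (Fintype.card G.V / m) * TCnorm G.gdist (fun x => μ.1 x - μ'.1 x) := by
        simp; ring
    _ ≤ _ := by
        gcongr
        exact le_max_right _ _

lemma c1_lower {G : WGraph} {n : ℕ} {lev : G.ι → ℕ} {I : Type} [Fintype I]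
    {j : I → ℕ} {ℓ : I → ℝ} {a b : I → G.V} {κ : ℝ} (hG : GoodG G n lev I j ℓ a b κ) :
    (2 - Real.sqrt 2) / 4 * κ * n ≤ c1TC G.gdist := by
  classical
  have hd := gdist_nonneg hG.len_pos
  have hs2 : Real.sqrt 2 ^ 2 = 2 := Real.sq_sqrt (by norm_num)
  have hs0 : 0 ≤ Real.sqrt 2 := Real.sqrt_nonneg 2
  have hs : Real.sqrt 2 < 2 := by nlinarith
  have hden : 0 < 2 - Real.sqrt 2 := by linarith
  refine le_csInf (c1_set_nonempty hG.len_pos hG.conn) ?_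
  rintro D ⟨hD1, Ω, _, ν, f, hf⟩
  -- the lattice embedding
  have hbs : ∀ w : G.V → ℤ, ∑ z, ((w z : ℝ) - if z = G.s then (∑ v, (w v : ℝ)) else 0) = 0 := by
    intro w
    rw [Finset.sum_sub_distrib]; simp
  let bb : (G.V → ℤ) → {μ : G.V → ℝ // ∑ x, μ x = 0} := fun w =>
    ⟨fun z => (w z : ℝ) - if z = G.s then (∑ v, (w v : ℝ)) else 0, hbs w⟩
  let F : (G.V → ℤ) → Lp ℝ 1 ν := fun w => f (bb w)
  have hadd : ∀ x w : G.V → ℤ, (fun z => (bb (x + w)).1 z - (bb x).1 z) = (bb w).1 := by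
    intro x w
    ext z
    simp only [bb, Pi.add_apply, Int.cast_add, Finset.sum_add_distrib]
    split_ifs <;> ring
  have hF : ∀ x w, TCnorm G.gdist (bb w).1 ≤ ‖F (x + w) - F x‖ ∧
      ‖F (x + w) - F x‖ ≤ D * TCnorm G.gdist (bb w).1 := by
    intro x w
    have := hf (bb (x + w)) (bb x)
    beta_reduce at this
    rw [hadd, dist_eq_norm] at this
    exact this
  have hzero : ∀ w : G.V → ℤ, ∑ v, w v = 0 → (bb w).1 = fun z => (w z : ℝ) := by
    intro w hw
    have : ∑ v, (w v : ℝ) = 0 := by exact_mod_cast hw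
    ext z
    simp [bb, this]
  -- edge tests
  let u : G.ι → G.V → ℤ := fun e z =>
    (if G.src e = z then 1 else 0) - (if G.dst e = z then 1 else 0)
  have hu : ∀ e, ∑ z, u e z = 0 := by intro e; simp [u, Finset.sum_sub_distrib]
  have huφ : ∀ e (φ : G.V → ℝ), ∑ z, (u e z : ℝ) * φ z = φ (G.src e) - φ (G.dst e) := by
    intro e φ
    simp [u, sub_mul, Finset.sum_sub_distrib]
  -- cycle tests
  let w : Fin n × (I → Bool) → G.V → ℤ := fun q z => ∑ c, sg (q.2 c) *
    (if j c = q.1 then (if a c = z then 1 else 0) - (if b c = z then 1 else 0) else 0)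
  have hwφ : ∀ q (φ : G.V → ℝ), ∑ z, (w q z : ℝ) * φ z =
      ∑ c, (sg (q.2 c) : ℝ) * (if j c = q.1 then φ (a c) - φ (b c) else 0) := by
    intro q φ
    simp only [w, Int.cast_sum, Finset.sum_mul]
    rw [Finset.sum_comm]
    refine Finset.sum_congr rfl fun c _ => ?_
    by_cases hk : j c = q.1
    · simp only [hk, if_true]
      push_cast
      simp only [mul_assoc, ← Finset.mul_sum, sub_mul, Finset.sum_sub_distrib]
      simp
    · simp [hk]
  have hw : ∀ q, ∑ z, w q z = 0 := by
    intro q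
    have h1 := hwφ q (fun _ => 1)
    simp only [mul_one, sub_self, ite_self, mul_zero, Finset.sum_const_zero] at h1
    exact_mod_cast h1
  have hT := transfer F w u (fun q => (1 / 2 : ℝ) ^ (q.1 : ℕ) * ((2 : ℝ) ^ Fintype.card I)⁻¹)
    (fun e => 4 / (2 - Real.sqrt 2) * G.th e) (fun q => by positivity)
    (fun e => by rw [hG.th_eq]; positivity)
    (fun q => ∑ c, if j c = q.1 then κ * ℓ c else 0) (fun e => D * G.len e) ?_ ?_ ?_ ?_
  · -- conclusion
    have e1 : ∑ e, 4 / (2 - Real.sqrt 2) * G.th e * (D * G.len e) = 4 / (2 - Real.sqrt 2) * D := by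
      have : ∀ e, 4 / (2 - Real.sqrt 2) * G.th e * (D * G.len e) =
        4 / (2 - Real.sqrt 2) * D * (G.th e * G.len e) := fun e => by ring
      rw [Finset.sum_congr rfl fun e _ => this e, ← Finset.mul_sum, hG.sum_one, mul_one]
    have e2 : ∑ q : Fin n × (I → Bool), (1 / 2 : ℝ) ^ (q.1 : ℕ) * ((2 : ℝ) ^ Fintype.card I)⁻¹ *
        (∑ c, if j c = q.1 then κ * ℓ c else 0) = κ * n := by
      rw [Fintype.sum_prod_type]
      have h1 : ∀ k : Fin n, ∑ _ε : I → Bool, (1 / 2 : ℝ) ^ (k : ℕ) * ((2 : ℝ) ^ Fintype.card I)⁻¹ *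
        (∑ c, if j c = k then κ * ℓ c else 0) =
          ∑ c, if j c = k then κ * ((1 / 2 : ℝ) ^ (j c) * ℓ c) else 0 := by
        intro k
        rw [Finset.sum_const, nsmul_eq_mul]
        simp only [Finset.card_univ, Fintype.card_fun, Fintype.card_bool]
        push_cast
        have : (2 : ℝ) ^ Fintype.card I * ((1 / 2 : ℝ) ^ (k : ℕ) * ((2 : ℝ) ^ Fintype.card I)⁻¹ *
          (∑ c, if j c = k then κ * ℓ c else 0)) = (1 / 2 : ℝ) ^ (k : ℕ) *
            (∑ c, if j c = k then κ * ℓ c else 0) := by field_simp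
        rw [this, Finset.mul_sum]
        refine Finset.sum_congr rfl fun c _ => ?_
        split_ifs with h
        · rw [h]; ring
        · simp
      rw [Finset.sum_congr rfl fun k _ => h1 k, Finset.sum_comm, ← hG.tot, Finset.mul_sum]
      refine Finset.sum_congr rfl fun c _ => ?_
      rw [Finset.sum_eq_single ⟨j c, hG.j_lt c⟩]
      · simp
      · intro k _ hk
        rw [if_neg]
        intro h
        exact hk (Fin.ext h.symm)
      · simp
    rw [e1, e2] at hT
    have : (2 - Real.sqrt 2) / 4 * (κ * n) ≤ (2 - Real.sqrt 2) / 4 * (4 / (2 - Real.sqrt 2) * D) :=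
      mul_le_mul_of_nonneg_left hT (by positivity)
    have e3 : (2 - Real.sqrt 2) / 4 * (4 / (2 - Real.sqrt 2) * D) = D := by field_simp
    rw [e3] at this
    linarith
  · -- lower bounds
    intro q x R
    refine le_trans ?_ (hF x (R • w q)).1
    obtain ⟨g, hg1, -, hg3⟩ := hG.wit q.1 (fun c => (sg (q.2 c) : ℝ)) (by
      intro c; cases q.2 c <;> simp [sg])
    have hz : ∑ v, (R • w q) v = 0 := by
      simp only [Pi.smul_apply, ← Finset.smul_sum, hw, smul_zero]
    refine le_trans (le_of_eq ?_) (TC_lower G.gdist (bb (R • w q)).1 (bb (R • w q)).2 G.s g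
      (lip_gdist hG.conn g hg1))
    rw [hzero _ hz]
    have : ∀ z, g z * (((R • w q) z : ℤ) : ℝ) = R * ((w q z : ℝ) * g z) := by
      intro z; simp; ring
    rw [Finset.sum_congr rfl fun z _ => this z, ← Finset.mul_sum, hwφ]
    congr 1
    refine Finset.sum_congr rfl fun c _ => ?_
    split_ifs with h
    · rw [hg3 c h]
      cases q.2 c <;> simp [sg]
    · simp
  · -- upper bounds
    intro e x
    refine (hF x (u e)).2.trans ?_
    rw [hzero _ (hu e)]
    gcongr
    have := TC_le_single G.gdist hd (G.src e) (G.dst e)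
    refine le_trans (le_of_eq ?_) (this.trans (gdist_edge hG.len_pos e))
    congr 1
    ext z
    simp [u]
  · intro v
    exact ⟨_, fun x => (hF x v).2⟩
  · -- the linear inequality
    have hcut : ∀ φ : G.V → ℝ, (∀ z, φ z = 0 ∨ φ z = 1) →
        ∑ q : Fin n × (I → Bool), (1 / 2 : ℝ) ^ (q.1 : ℕ) * ((2 : ℝ) ^ Fintype.card I)⁻¹ *
          |∑ z, (w q z : ℝ) * φ z| ≤
        ∑ e, 4 / (2 - Real.sqrt 2) * G.th e * |φ (G.src e) - φ (G.dst e)| := by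
      intro φ hφ
      have := cut_bound n j a b G.src G.dst G.th φ hφ (by
        intro k
        refine (hG.var φ k).trans ?_
        gcongr with e
        have : 0 ≤ G.th e := by rw [hG.th_eq]; positivity
        split_ifs
        · exact le_rfl
        · positivity)
      rw [Finset.mul_sum, ← Fin.sum_univ_eq_sum_range (fun k => ∑ ε : I → Bool,
        (1 / 2 : ℝ) ^ k * ((2 : ℝ) ^ Fintype.card I)⁻¹ *
        |∑ c, (sg (ε c) : ℝ) * (if j c = k then φ (a c) - φ (b c) else 0)|)] at this
      rw [Fintype.sum_prod_type]
      simp only [hwφ]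
      simpa only [mul_assoc] using this
    intro φ
    simp only [huφ]
    refine coarea (fun q z => (w q z : ℝ)) (fun q => by exact_mod_cast hw q) _
      (fun q => by positivity) _ G.src G.dst hcut φ

lemma tele_fwd {V : Type} (ψ : V → ℝ) : ∀ (k : ℕ) (v : Fin (k + 1) → V) (i : Fin (k + 1)),
    |ψ (v 0) - ψ (v i)| ≤ ∑ l : Fin k, |ψ (v l.castSucc) - ψ (v l.succ)| := by
  intro k
  induction k with
  | zero => intro v i; rw [Fin.fin_one_eq_zero i]; simp
  | succ k ih =>
    intro v i
    rw [Fin.sum_univ_succ]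
    rcases Fin.eq_zero_or_eq_succ i with rfl | ⟨i, rfl⟩
    · simp only [sub_self, abs_zero]; positivity
    · have h1 := ih (fun l => v l.succ) i
      have h2 := abs_sub_le (ψ (v 0)) (ψ (v (Fin.succ 0))) (ψ (v i.succ))
      simp only [Fin.castSucc_zero, Fin.succ_castSucc] at h1 h2 ⊢
      linarith

lemma diwalk_fin (G : WGraph) : ∀ (k : ℕ) (v : Fin (k + 1) → G.V) (E : Fin k → G.ι),
    (∀ i, G.src (E i) = v i.castSucc ∧ G.dst (E i) = v i.succ) →
    G.IsDiWalk (v 0) (v (Fin.last k)) (List.ofFn E) := by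
  intro k
  induction k with
  | zero => intro v E _; rfl
  | succ k ih =>
    intro v E hE
    rw [List.ofFn_succ]
    refine ⟨by simpa using (hE 0).1, ?_⟩
    rw [(hE 0).2]
    exact ih (fun l => v l.succ) (fun l => E l.succ) (fun i => by simpa using hE i.succ)

lemma path_len {G : WGraph} (hG : IsSTGraph G) (k : ℕ) (v : Fin (k + 1) → G.V) (E : Fin k → G.ι)
    (hE : ∀ i, G.src (E i) = v i.castSucc ∧ G.dst (E i) = v i.succ)
    (h0 : v 0 = G.s) (hl : v (Fin.last k) = G.t) : ∑ i, G.len (E i) = 1 := by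
  have h1 := diwalk_fin G k v E hE
  rw [h0, hl] at h1
  have h2 := hG.dir_geodesic _ _ _ h1
  rw [hG.dist_st] at h2
  rw [h2, WGraph.diLen, List.map_ofFn, List.sum_ofFn]
  rfl

/-- Vertices of the inserted graph inside the edge replacement. -/
def repEmb (G : WGraph) (e₀ : G.ι) (H : WGraph) (v : H.V) :
    G.V ⊕ {v : H.V // v ≠ H.s ∧ v ≠ H.t} :=
  if hs : v = H.s then Sum.inl (G.src e₀)
  else if ht : v = H.t then Sum.inl (G.dst e₀)
  else Sum.inr ⟨v, hs, ht⟩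

lemma repEmb_s (G : WGraph) (e₀ : G.ι) (H : WGraph) :
    repEmb G e₀ H H.s = Sum.inl (G.src e₀) := by simp [repEmb]

lemma repEmb_t (G : WGraph) (e₀ : G.ι) {H : WGraph} (st : H.s ≠ H.t) :
    repEmb G e₀ H H.t = Sum.inl (G.dst e₀) := by simp [repEmb, st.symm]

lemma repEmb_mid (G : WGraph) (e₀ : G.ι) {H : WGraph} (v : {v : H.V // v ≠ H.s ∧ v ≠ H.t}) :
    repEmb G e₀ H v.1 = Sum.inr v := by simp [repEmb, v.2.1, v.2.2]

lemma repEmb_elim {G H : WGraph} (e₀ : G.ι) (g : G.V → ℝ) (ψ : H.V → ℝ)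
    (hs : ψ H.s = g (G.src e₀)) (ht : ψ H.t = g (G.dst e₀)) (v : H.V) :
    Sum.elim g (fun q : {v : H.V // v ≠ H.s ∧ v ≠ H.t} => ψ q.1) (repEmb G e₀ H v) = ψ v := by
  unfold repEmb
  split_ifs with h1 h2
  · rw [h1, hs]; rfl
  · rw [h2, ht]; rfl
  · rfl

lemma rep_sum {G H : WGraph} (e₀ : G.ι) (F : {e : G.ι // e ≠ e₀} ⊕ H.ι → ℝ) :
    @Finset.sum (G.edgeReplace e₀ H).ι ℝ _ (@Finset.univ _ (G.edgeReplace e₀ H).finι) F =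
      ∑ e, F (Sum.inl e) + ∑ f, F (Sum.inr f) :=
  Fintype.sum_sum_type F

lemma sum_ne {ι : Type} [Fintype ι] [DecidableEq ι] (e₀ : ι) (F : ι → ℝ) :
    ∑ e, F e = F e₀ + ∑ e : {e : ι // e ≠ e₀}, F e.1 :=
  Fintype.sum_eq_add_sum_subtype_ne F e₀

lemma min_lip {a b c d l : ℝ} (h1 : |a - b| ≤ l) (h2 : |c - d| ≤ l) :
    |min a c - min b d| ≤ l :=
  (abs_min_sub_min_le_max a c b d).trans (max_le h1 h2)

lemma goodH_rep (Pa : WGraph) (hPa : IsSTGraph Pa) (hPaPath : IsSTPath Pa) (e₀ : Pa.ι)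
    (Cy : WGraph) (hCy : IsSTGraph Cy)
    (k₁ k₂ : ℕ)
    (v₁ : Fin (k₁ + 1) → Cy.V) (v₂ : Fin (k₂ + 1) → Cy.V)
    (E : Fin k₁ ⊕ Fin k₂ ≃ Cy.ι)
    (hv₁0 : v₁ 0 = Cy.s) (hv₁l : v₁ (Fin.last k₁) = Cy.t)
    (hv₂0 : v₂ 0 = Cy.s) (hv₂l : v₂ (Fin.last k₂) = Cy.t)
    (hshare : ∀ i j, v₁ i = v₂ j → v₁ i = Cy.s ∨ v₁ i = Cy.t)
    (hE₁ : ∀ i : Fin k₁,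
      Cy.src (E (Sum.inl i)) = v₁ i.castSucc ∧ Cy.dst (E (Sum.inl i)) = v₁ i.succ)
    (hE₂ : ∀ j : Fin k₂,
      Cy.src (E (Sum.inr j)) = v₂ j.castSucc ∧ Cy.dst (E (Sum.inr j)) = v₂ j.succ)
    (hth : ∀ e, Cy.th e = 1 / 2) (i : Fin (k₁ + 1)) (j : Fin (k₂ + 1)) :
    ∃ (cyc : (Pa.edgeReplace e₀ Cy).ι → ℕ) (ρ h : (Pa.edgeReplace e₀ Cy).V → ℝ)
      (u₁ u₂ : (Pa.edgeReplace e₀ Cy).V),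
      GoodH (Pa.edgeReplace e₀ Cy) cyc ρ h u₁ u₂ (Pa.len e₀ *
        (min (Cy.gdist (v₁ i) Cy.s) (Cy.gdist (v₁ i) Cy.t) +
         min (Cy.gdist (v₂ j) Cy.s) (Cy.gdist (v₂ j) Cy.t))) := by
  classical
  obtain ⟨k, P, p, -, hp0, hpl, hP, hPth⟩ := hPaPath
  have hPc := fconn_of_walk hPa.conn
  have hCc := fconn_of_walk hCy.conn
  have hl0 := hPa.len_pos e₀
  -- the vertical coordinate
  let D : Pa.V → ℝ := fun x => Pa.gdist x Pa.t
  have hD : ∀ f, |D (Pa.src f) - D (Pa.dst f)| ≤ Pa.len f := gdist_lip hPa.len_pos hPc Pa.t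
  let R : Cy.V → ℝ := fun v => D (Pa.dst e₀) + (D (Pa.src e₀) - D (Pa.dst e₀)) * Cy.gdist v Cy.t
  have hR := repEmb_elim e₀ D R (by simp [R, hCy.dist_st]) (by simp [R, gdist_self hCy.len_pos])
  -- the height function
  let m : Cy.V → ℝ := fun x => min (Cy.gdist x Cy.s) (Cy.gdist x Cy.t)
  have hms : m Cy.s = 0 := by
    simp [m, gdist_self hCy.len_pos, gdist_nonneg hCy.len_pos]
  have hmt : m Cy.t = 0 := by
    simp [m, gdist_self hCy.len_pos, gdist_nonneg hCy.len_pos]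
  have hm : ∀ f, |m (Cy.src f) - m (Cy.dst f)| ≤ Cy.len f := fun f =>
    min_lip (gdist_lip hCy.len_pos hCc Cy.s f) (gdist_lip hCy.len_pos hCc Cy.t f)
  let hC : Cy.V → ℝ := fun x => Pa.len e₀ * if ∃ i, v₁ i = x then m x else - m x
  have hC1 : ∀ i, hC (v₁ i) = Pa.len e₀ * m (v₁ i) := by
    intro i
    simp only [hC]
    rw [if_pos ⟨i, rfl⟩]
  have hC2 : ∀ j, hC (v₂ j) = - (Pa.len e₀ * m (v₂ j)) := by
    intro j
    simp only [hC]
    split_ifs with h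
    · obtain ⟨i, hi⟩ := h
      have : m (v₂ j) = 0 := by
        rw [← hi]
        rcases hshare i j hi with h | h <;> rw [h] <;> assumption
      rw [this]; simp
    · ring
  have hCs : hC Cy.s = 0 := by rw [← hv₁0, hC1, hv₁0, hms, mul_zero]
  have hCt : hC Cy.t = 0 := by rw [← hv₁l, hC1, hv₁l, hmt, mul_zero]
  have hH := repEmb_elim e₀ (fun _ => 0) hC hCs hCt
  have hClip : ∀ f, |hC (Cy.src f) - hC (Cy.dst f)| ≤ Pa.len e₀ * Cy.len f := by
    intro f
    have h1 := hm f
    obtain ⟨q, rfl⟩ := E.surjective f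
    rcases q with q | q
    · rw [(hE₁ q).1, (hE₁ q).2] at h1 ⊢
      rw [hC1, hC1, ← mul_sub, abs_mul, abs_of_pos hl0]
      gcongr
    · rw [(hE₂ q).1, (hE₂ q).2] at h1 ⊢
      rw [hC2, hC2, neg_sub_neg, ← mul_sub, abs_mul, abs_of_pos hl0, abs_sub_comm]
      gcongr
  have hCysum : ∀ F : Cy.ι → ℝ, ∑ f, F f = ∑ q, F (E (Sum.inl q)) + ∑ q, F (E (Sum.inr q)) := by
    intro F
    rw [← E.sum_comp, Fintype.sum_sum_type]
  have hPsum : ∀ F : Pa.ι → ℝ, ∑ f, F f = ∑ q, F (P q) := fun F => (P.sum_comp F).symm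
  -- path bounds in the cycle
  have hg1 : ∀ (ψ : Cy.V → ℝ) (i : Fin (k₁ + 1)), |ψ Cy.s - ψ (v₁ i)| ≤
      ∑ q, |ψ (Cy.src (E (Sum.inl q))) - ψ (Cy.dst (E (Sum.inl q)))| := by
    intro ψ i
    have := tele_fwd ψ k₁ v₁ i
    rw [hv₁0] at this
    simpa only [hE₁] using this
  have hg2 : ∀ (ψ : Cy.V → ℝ) (i : Fin (k₂ + 1)), |ψ Cy.s - ψ (v₂ i)| ≤
      ∑ q, |ψ (Cy.src (E (Sum.inr q))) - ψ (Cy.dst (E (Sum.inr q)))| := by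
    intro ψ i
    have := tele_fwd ψ k₂ v₂ i
    rw [hv₂0] at this
    simpa only [hE₂] using this
  refine ⟨Sum.elim (fun _ => 0) (fun _ => 1),
    Sum.elim D (fun q : {v : Cy.V // v ≠ Cy.s ∧ v ≠ Cy.t} => R q.1),
    Sum.elim (fun _ => 0) (fun q : {v : Cy.V // v ≠ Cy.s ∧ v ≠ Cy.t} => hC q.1),
    repEmb Pa e₀ Cy (v₁ i), repEmb Pa e₀ Cy (v₂ j), ?_⟩
  refine
  { st := fun h => hPa.s_ne_t (Sum.inl.inj h)
    len_pos := ?_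
    th_eq := ?_
    cyc_le := ?_
    rho_s := hPa.dist_st
    rho_t := gdist_self hPa.len_pos _
    rho_lip := ?_
    h_s := rfl
    h_t := rfl
    h_lip := ?_
    h_zero := ?_
    h_val := ?_
    flow := ?_
    cycl := ?_
    sum_one := ?_
    conn := ?_ }
  · rintro (f | f)
    · exact hPa.len_pos _
    · exact mul_pos hl0 (hCy.len_pos _)
  · rintro (f | f)
    · exact (hPth _).trans (by simp)
    · change Pa.th e₀ * Cy.th f = _
      rw [hPth, hth]; simp
  · rintro (f | f)
    · exact Nat.zero_le _
    · exact le_rfl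
  · rintro (f | f)
    · exact hD _
    · change |Sum.elim D _ (repEmb Pa e₀ Cy (Cy.src f)) -
        Sum.elim D _ (repEmb Pa e₀ Cy (Cy.dst f))| ≤ Pa.len e₀ * Cy.len f
      rw [hR, hR]
      have : R (Cy.src f) - R (Cy.dst f) = (D (Pa.src e₀) - D (Pa.dst e₀)) *
        (Cy.gdist (Cy.src f) Cy.t - Cy.gdist (Cy.dst f) Cy.t) := by simp only [R]; ring
      rw [this, abs_mul]
      exact mul_le_mul (hD e₀) (gdist_lip hCy.len_pos hCc Cy.t f) (abs_nonneg _) hl0.le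
  · rintro (f | f)
    · change |(0 : ℝ) - 0| ≤ Pa.len f.1
      simpa using (hPa.len_pos _).le
    · change |Sum.elim _ _ (repEmb Pa e₀ Cy (Cy.src f)) -
        Sum.elim _ _ (repEmb Pa e₀ Cy (Cy.dst f))| ≤ Pa.len e₀ * Cy.len f
      rw [hH, hH]
      exact hClip f
  · rintro (f | f) h
    · rfl
    · exact absurd h one_ne_zero
  · rw [hH, hH, hC1, hC2]
    simp only [m]
    ring
  · intro ψ
    refine le_trans ?_ (rep_sum e₀ (Sum.elim (fun e => Pa.th e.1 *
      |ψ (Sum.inl (Pa.src e.1)) - ψ (Sum.inl (Pa.dst e.1))|)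
      (fun f => (Pa.th e₀ * Cy.th f) * |ψ (repEmb Pa e₀ Cy (Cy.src f)) -
        ψ (repEmb Pa e₀ Cy (Cy.dst f))|))).ge |>.trans (le_of_eq ?_)
    · simp only [Sum.elim_inl, Sum.elim_inr, hPth, hth, one_mul]
      rw [← Finset.mul_sum, hCysum]
      have h1 := hg1 (fun v => ψ (repEmb Pa e₀ Cy v)) (Fin.last _)
      have h2 := hg2 (fun v => ψ (repEmb Pa e₀ Cy v)) (Fin.last _)
      rw [hv₁l] at h1
      rw [hv₂l] at h2
      simp only [repEmb_s, repEmb_t Pa e₀ hCy.s_ne_t] at h1 h2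
      have h3 := tele_fwd (fun x => ψ (Sum.inl x)) k p (Fin.last k)
      rw [hp0, hpl] at h3
      have h4 := sum_ne e₀ (fun e => |ψ (Sum.inl (Pa.src e)) - ψ (Sum.inl (Pa.dst e))|)
      rw [hPsum] at h4
      simp only [hP] at h4
      rw [h4] at h3
      change |ψ (Sum.inl Pa.s) - ψ (Sum.inl Pa.t)| ≤ _
      linarith
    · refine Finset.sum_congr rfl ?_
      rintro (f | f) _ <;> rfl
  · intro ψ
    have h1 := hg1 (fun v => ψ (repEmb Pa e₀ Cy v)) i
    have h2 := hg2 (fun v => ψ (repEmb Pa e₀ Cy v)) j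
    have h3 := abs_sub_le (ψ (repEmb Pa e₀ Cy (v₁ i))) (ψ (repEmb Pa e₀ Cy Cy.s))
      (ψ (repEmb Pa e₀ Cy (v₂ j)))
    rw [abs_sub_comm (ψ (repEmb Pa e₀ Cy (v₁ i))) (ψ (repEmb Pa e₀ Cy Cy.s))] at h3
    have h4 := rep_sum e₀ (Sum.elim (fun _ : {e : Pa.ι // e ≠ e₀} => (0 : ℝ))
      (fun f => (Pa.th e₀ * Cy.th f) * |ψ (repEmb Pa e₀ Cy (Cy.src f)) -
        ψ (repEmb Pa e₀ Cy (Cy.dst f))|))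
    simp only [Sum.elim_inl, Sum.elim_inr, hPth, hth, one_mul, Finset.sum_const_zero,
      zero_add] at h4
    rw [← Finset.mul_sum, hCysum] at h4
    refine le_trans (h3.trans (add_le_add h1 h2)) (le_of_eq ?_)
    have h5 : ∀ A B C : ℝ, A = 1 / 2 * C → B = A → C = 2 * B := by
      intro A B C h h'; rw [h', h]; ring
    refine h5 _ _ _ h4 (Finset.sum_congr rfl ?_)
    rintro (f | f) _
    · rfl
    · change (Pa.th e₀ * Cy.th f) * |ψ (repEmb Pa e₀ Cy (Cy.src f)) -
        ψ (repEmb Pa e₀ Cy (Cy.dst f))| = 1 / 2 * _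
      rw [hPth, hth, one_mul]
  · have h4 := rep_sum e₀ (Sum.elim (fun e : {e : Pa.ι // e ≠ e₀} => Pa.th e.1 * Pa.len e.1)
      (fun f => (Pa.th e₀ * Cy.th f) * (Pa.len e₀ * Cy.len f)))
    have h5 : ∑ f, Cy.len f = 2 := by
      rw [hCysum, path_len hCy k₁ v₁ _ hE₁ hv₁0 hv₁l, path_len hCy k₂ v₂ _ hE₂ hv₂0 hv₂l]
      norm_num
    have h6 := path_len hPa k p P hP hp0 hpl
    rw [← hPsum, sum_ne e₀] at h6
    simp only [Sum.elim_inl, Sum.elim_inr, hPth, hth, one_mul] at h4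
    rw [← Finset.mul_sum, ← Finset.mul_sum, h5] at h4
    have h7 : ∀ A B C : ℝ, A = C + 1 / 2 * (Pa.len e₀ * 2) → B = A → Pa.len e₀ + C = 1 → B = 1 := by
      intro A B C a b c; rw [b, a]; linarith
    refine h7 _ _ _ h4 (Finset.sum_congr rfl ?_) h6
    rintro (f | f) _
    · change Pa.th f.1 * Pa.len f.1 = Pa.len f.1
      rw [hPth, one_mul]
    · change (Pa.th e₀ * Cy.th f) * (Pa.len e₀ * Cy.len f) = 1 / 2 * (Pa.len e₀ * Cy.len f)
      rw [hPth, hth, one_mul]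
  · intro g hg
    have h1 := hCc (fun v => g (repEmb Pa e₀ Cy v)) (fun f => hg (Sum.inr f))
    have h2 := hPc (fun x => g (Sum.inl x)) (by
      intro f
      by_cases hf : f = e₀
      · have := h1 Cy.s Cy.t
        simp only [repEmb_s, repEmb_t Pa e₀ hCy.s_ne_t] at this
        rw [hf]; exact this
      · exact hg (Sum.inl ⟨f, hf⟩))
    have h3 : ∀ x, g x = g (Sum.inl (Pa.src e₀)) := by
      rintro (x | x)
      · exact h2 _ _
      · have := h1 x.1 Cy.s
        simp only [repEmb_mid, repEmb_s] at this
        exact this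
    intro x y
    rw [h3 x, h3 y]

/-- Let `H = Pa ∪_{e₀} Cy` be a cycle-with-handles, where `Pa` is an
`st`-path, `e₀ ∈ E(Pa)`, and `Cy` is an `st`-cycle whose two directed paths from `s_Cy` to
`t_Cy` are given by the vertex sequences `v₁ : Fin (k₁+1) → Cy.V` and
`v₂ : Fin (k₂+1) → Cy.V` (each with at least three vertices, sharing only `s_Cy` and
`t_Cy`, together covering `Cy`, all edges of thickness `1/2`). Let `d_rep = d_Pa(e₀)` and
`ht_cyc = max_{u∈γ₁} dist_Cy(u,{s,t}) + max_{u∈γ₂} dist_Cy(u,{s,t})`. Then for every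
`n ≥ 0`, `c₁(TC(H^{⊘n})) ≥ ((2−√2)/4)·d_rep·ht_cyc·n`. -/
theorem c1_TC_cycleWithHandles_lower
    (Pa : WGraph) (hPa : IsSTGraph Pa) (hPaPath : IsSTPath Pa) (e₀ : Pa.ι)
    (Cy : WGraph) (hCy : IsSTGraph Cy)
    (k₁ k₂ : ℕ) (hk₁ : 2 ≤ k₁) (hk₂ : 2 ≤ k₂)
    (v₁ : Fin (k₁ + 1) → Cy.V) (v₂ : Fin (k₂ + 1) → Cy.V)
    (E : Fin k₁ ⊕ Fin k₂ ≃ Cy.ι)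
    (hv₁inj : Function.Injective v₁) (hv₂inj : Function.Injective v₂)
    (hv₁0 : v₁ 0 = Cy.s) (hv₁l : v₁ (Fin.last k₁) = Cy.t)
    (hv₂0 : v₂ 0 = Cy.s) (hv₂l : v₂ (Fin.last k₂) = Cy.t)
    (hshare : ∀ i j, v₁ i = v₂ j → v₁ i = Cy.s ∨ v₁ i = Cy.t)
    (hcover : ∀ x : Cy.V, (∃ i, v₁ i = x) ∨ (∃ j, v₂ j = x))
    (hE₁ : ∀ i : Fin k₁,
      Cy.src (E (Sum.inl i)) = v₁ i.castSucc ∧ Cy.dst (E (Sum.inl i)) = v₁ i.succ)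
    (hE₂ : ∀ j : Fin k₂,
      Cy.src (E (Sum.inr j)) = v₂ j.castSucc ∧ Cy.dst (E (Sum.inr j)) = v₂ j.succ)
    (hth : ∀ e, Cy.th e = 1 / 2) :
    ∀ n : ℕ,
      c1TC ((Pa.edgeReplace e₀ Cy).slashPow n).gdist ≥
        (2 - Real.sqrt 2) / 4 * Pa.gdist (Pa.src e₀) (Pa.dst e₀) *
          ((Finset.univ.sup' Finset.univ_nonempty
              (fun i : Fin (k₁ + 1) =>
                min (Cy.gdist (v₁ i) Cy.s) (Cy.gdist (v₁ i) Cy.t))) +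
           (Finset.univ.sup' Finset.univ_nonempty
              (fun j : Fin (k₂ + 1) =>
                min (Cy.gdist (v₂ j) Cy.s) (Cy.gdist (v₂ j) Cy.t)))) * n := by
  intro n
  obtain ⟨i, -, hi⟩ := Finset.exists_mem_eq_sup' Finset.univ_nonempty
    (fun i : Fin (k₁ + 1) => min (Cy.gdist (v₁ i) Cy.s) (Cy.gdist (v₁ i) Cy.t))
  obtain ⟨j, -, hj⟩ := Finset.exists_mem_eq_sup' Finset.univ_nonempty
    (fun j : Fin (k₂ + 1) => min (Cy.gdist (v₂ j) Cy.s) (Cy.gdist (v₂ j) Cy.t))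
  obtain ⟨cyc, ρ, h, u₁, u₂, hH⟩ := goodH_rep Pa hPa hPaPath e₀ Cy hCy k₁ k₂ v₁ v₂ E hv₁0 hv₁l
    hv₂0 hv₂l hshare hE₁ hE₂ hth i j
  obtain ⟨lev, I, inst, jj, ℓ, a, b, hG⟩ := goodG_pow hH n
  have hlen : Pa.gdist (Pa.src e₀) (Pa.dst e₀) = Pa.len e₀ := by
    rw [hPa.dir_geodesic _ _ [e₀] ⟨rfl, rfl⟩]
    simp [WGraph.diLen]
  rw [hi, hj, hlen, ge_iff_le]
  have := c1_lower hG
  refine le_trans (le_of_eq ?_) this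
  ring
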